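/- arXiv:2008.10097 — 7 statements merged into one kernel-verified Lean document; each statement's English description precedes it below -/
import Mathlib

section
/- Fix ρ ∈ [0,1) and an integer k ≥ 1. Define L : ℝ × ℝ → ℝ by L(x,y) = (1−ρ²)^{−1/2}·exp((−ρ²(x²+y²) + 2ρxy)/(2(1−ρ²))). Let a₁,…,a_k, b₁,…,b_k be 2k i.i.d. standard Gaussian random variables. Then E[∏_{ℓ=1}^{k} L(a_ℓ, b_ℓ)·L(a_ℓ, b_{ℓ+1})] = 1/(1 − ρ^{2k}), where indices are cyclic, i.e. b_{k+1} := b₁. -/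
/-!
The kernel `Lgauss r` acts on `L²(γ)`, `γ` the standard Gaussian measure, as the Mehler
(Ornstein–Uhlenbeck) operator, and these operators form a semigroup:
`∫ L_r(x, y) L_q(y, z) dγ(y) = L_{rq}(x, z)` (`lintegral_kernel_mul_kernel`). The proof completes
the square: as a function of `y` the integrand, with the density of `γ`, is `L_{rq}(x, z)` times
another Gaussian density.

Integrating out the `a_ℓ` replaces each pair of factors by `L_{ρ²}(b_ℓ, b_{ℓ+1})`, and integrating
out the `b_ℓ` one after the other contracts the cycle (`lintegral_cycle`) to the trace
`∫ L_r(x, x) dγ(x) = 1 / (1 - r)` with `r = ρ ^ (2k)` (`lintegral_kernel_diag`).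

Since everything is nonnegative, the computation is carried out with lower Lebesgue integrals, so
that Tonelli's theorem applies without integrability hypotheses.
-/

open MeasureTheory ProbabilityTheory

noncomputable section

/-- The likelihood-ratio kernel of the correlated Gaussian pair: the ratio of the density of a
centered bivariate Gaussian with unit variances and correlation `ρ` to the product of two standard
Gaussian densities. -/
def Lgauss (ρ x y : ℝ) : ℝ :=
  (1 / Real.sqrt (1 - ρ ^ 2)) *
    Real.exp ((-(ρ ^ 2) * (x ^ 2 + y ^ 2) + 2 * ρ * x * y) / (2 * (1 - ρ ^ 2)))

open scoped ENNReal NNReal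

/-- The kernel `Lgauss`, valued in `ℝ≥0∞`. -/
def kernelE (r x y : ℝ) : ℝ≥0∞ := ENNReal.ofReal (Lgauss r x y)

lemma Lgauss_nonneg (r x y : ℝ) : 0 ≤ Lgauss r x y := by
  unfold Lgauss; positivity

lemma Lgauss_comm (r x y : ℝ) : Lgauss r x y = Lgauss r y x := by
  unfold Lgauss; ring_nf

lemma kernelE_comm (r x y : ℝ) : kernelE r x y = kernelE r y x := by
  unfold kernelE; rw [Lgauss_comm]

@[fun_prop]
lemma measurable_kernelE {α : Type*} [MeasurableSpace α] (r : ℝ) {f g : α → ℝ}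
    (hf : Measurable f) (hg : Measurable g) : Measurable fun a => kernelE r (f a) (g a) := by
  unfold kernelE Lgauss; fun_prop

/-- If `g` times the standard Gaussian density is `c` times some Gaussian density, then `g`
integrates to `c` against the standard Gaussian measure. -/
lemma lintegral_gaussian_of_density {g : ℝ → ℝ} (hg : Measurable g) {c m : ℝ}
    (hc : 0 ≤ c) {v : ℝ≥0} (hv : v ≠ 0)
    (h : ∀ y, gaussianPDFReal 0 1 y * g y = c * gaussianPDFReal m v y) :
    ∫⁻ y, ENNReal.ofReal (g y) ∂(gaussianReal 0 1) = ENNReal.ofReal c := by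
  rw [gaussianReal_of_var_ne_zero _ one_ne_zero,
    lintegral_withDensity_eq_lintegral_mul₀ (by fun_prop) (by fun_prop)]
  have : ∀ y, (gaussianPDF 0 1 * fun y => ENNReal.ofReal (g y)) y
      = ENNReal.ofReal c * gaussianPDF m v y := fun y => by
    rw [Pi.mul_apply, gaussianPDF, gaussianPDF,
      ← ENNReal.ofReal_mul (gaussianPDFReal_nonneg _ _ _), h, ENNReal.ofReal_mul hc]
  simp_rw [this]
  rw [lintegral_const_mul _ (by fun_prop), lintegral_gaussianPDF_eq_one _ hv, mul_one]

/-- Semigroup property of the Mehler kernel. -/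
lemma lintegral_kernel_mul_kernel {r q : ℝ} (hr0 : 0 ≤ r) (hr1 : r < 1) (hq0 : 0 ≤ q)
    (hq1 : q < 1) (x z : ℝ) :
    ∫⁻ y, kernelE r x y * kernelE q y z ∂(gaussianReal 0 1) = kernelE (r * q) x z := by
  have hr : 0 < 1 - r ^ 2 := by nlinarith
  have hq : 0 < 1 - q ^ 2 := by nlinarith
  have hrq : 0 < 1 - (r * q) ^ 2 := by nlinarith [mul_nonneg hr.le (sq_nonneg q)]
  have hvpos : 0 < (1 - r ^ 2) * (1 - q ^ 2) / (1 - (r * q) ^ 2) := by positivity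
  unfold kernelE
  simp_rw [← ENNReal.ofReal_mul (Lgauss_nonneg _ _ _)]
  -- Mean and variance come from completing the square in `y`.
  refine lintegral_gaussian_of_density
    (m := (r * (1 - q ^ 2) * x + q * (1 - r ^ 2) * z) / (1 - (r * q) ^ 2))
    (v := ((1 - r ^ 2) * (1 - q ^ 2) / (1 - (r * q) ^ 2)).toNNReal)
    (by unfold Lgauss; fun_prop) (Lgauss_nonneg _ _ _)
    (Real.toNNReal_pos.2 hvpos).ne' fun y => ?_
  simp only [gaussianPDFReal, Lgauss, NNReal.coe_one, Real.coe_toNNReal _ hvpos.le]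
  have hs : (√(2 * Real.pi * 1))⁻¹ * ((1 / √(1 - r ^ 2)) * (1 / √(1 - q ^ 2)))
      = 1 / √(1 - (r * q) ^ 2) *
        (√(2 * Real.pi * ((1 - r ^ 2) * (1 - q ^ 2) / (1 - (r * q) ^ 2))))⁻¹ := by
    rw [Real.sqrt_mul (by positivity) (_ / _), Real.sqrt_div (by positivity),
      Real.sqrt_mul hr.le, mul_one]
    have hS := Real.sqrt_pos.2 hrq
    generalize √(1 - (r * q) ^ 2) = S at hS ⊢
    have := Real.sqrt_pos.2 hr
    have := Real.sqrt_pos.2 hq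
    field_simp
  have he : -(y - 0) ^ 2 / (2 * 1)
        + ((-r ^ 2 * (x ^ 2 + y ^ 2) + 2 * r * x * y) / (2 * (1 - r ^ 2))
          + (-q ^ 2 * (y ^ 2 + z ^ 2) + 2 * q * y * z) / (2 * (1 - q ^ 2)))
      = (-(r * q) ^ 2 * (x ^ 2 + z ^ 2) + 2 * (r * q) * x * z) / (2 * (1 - (r * q) ^ 2))
        + -(y - (r * (1 - q ^ 2) * x + q * (1 - r ^ 2) * z) / (1 - (r * q) ^ 2)) ^ 2 /
          (2 * ((1 - r ^ 2) * (1 - q ^ 2) / (1 - (r * q) ^ 2))) := by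
    have := hr.ne'
    have := hq.ne'
    have := hrq.ne'
    rw [mul_pow] at *
    field_simp
    ring
  have h := congrArg₂ (· * ·) hs (congrArg Real.exp he)
  simp only [Real.exp_add] at h
  linear_combination h

/-- Trace of the Mehler kernel. -/
lemma lintegral_kernel_diag {r : ℝ} (hr0 : 0 ≤ r) (hr1 : r < 1) :
    ∫⁻ x, kernelE r x x ∂(gaussianReal 0 1) = ENNReal.ofReal (1 / (1 - r)) := by
  have h1 : 0 < 1 - r := by linarith
  have h2 : 0 < 1 + r := by linarith
  have hvpos : 0 < (1 + r) / (1 - r) := by positivity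
  unfold kernelE
  refine lintegral_gaussian_of_density (m := 0) (v := ((1 + r) / (1 - r)).toNNReal)
    (by unfold Lgauss; fun_prop) (by positivity)
    (Real.toNNReal_pos.2 hvpos).ne' fun y => ?_
  simp only [gaussianPDFReal, Lgauss, NNReal.coe_one, Real.coe_toNNReal _ hvpos.le]
  have hf : 1 - r ^ 2 = (1 - r) * (1 + r) := by ring
  have hs : (√(2 * Real.pi * 1))⁻¹ * (1 / √(1 - r ^ 2))
      = 1 / (1 - r) * (√(2 * Real.pi * ((1 + r) / (1 - r))))⁻¹ := by
    rw [Real.sqrt_mul (by positivity) (_ / _), Real.sqrt_div (by positivity), mul_one, hf,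
      Real.sqrt_mul h1.le]
    have := Real.sqrt_pos.2 h1
    have := Real.sqrt_pos.2 h2
    have h3 := Real.sq_sqrt h1.le
    field_simp
    linarith
  have he : -(y - 0) ^ 2 / (2 * 1)
        + (-r ^ 2 * (y ^ 2 + y ^ 2) + 2 * r * y * y) / (2 * (1 - r ^ 2))
      = -(y - 0) ^ 2 / (2 * ((1 + r) / (1 - r))) := by
    rw [hf]
    field_simp
    ring
  have h := congrArg₂ (· * ·) hs (congrArg Real.exp he)
  simp only [Real.exp_add] at h
  linear_combination h

/-- Tonelli's theorem separating the zeroth coordinate of `Fin (n + 1) → ℝ`. -/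
lemma lintegral_pi_cons (μ : Measure ℝ) [SigmaFinite μ] {n : ℕ} {f : (Fin (n + 1) → ℝ) → ℝ≥0∞}
    (hf : Measurable f) :
    ∫⁻ b, f b ∂(Measure.pi fun _ => μ)
      = ∫⁻ b, ∫⁻ x, f (Fin.cons x b) ∂μ ∂(Measure.pi fun _ : Fin n => μ) := by
  have h := (measurePreserving_piFinSuccAbove (fun _ : Fin (n + 1) => μ) 0).symm
  rw [← h.lintegral_comp hf, lintegral_prod_symm' _ (by fun_prop)]
  simp [MeasurableEquiv.piFinSuccAbove, Fin.insertNthEquiv]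

lemma lintegral_pi_prod (μ : Measure ℝ) [SigmaFinite μ] {n : ℕ} {f : Fin n → ℝ → ℝ≥0∞}
    (hf : ∀ i, Measurable (f i)) :
    ∫⁻ a, ∏ i, f i (a i) ∂(Measure.pi fun _ => μ) = ∏ i, ∫⁻ x, f i x ∂μ := by
  induction n with
  | zero => simp
  | succ n ih =>
    have hm (i : Fin n) : Measurable (f i.succ) := hf _
    rw [lintegral_pi_cons μ (by fun_prop)]
    simp only [Fin.prod_univ_succ, Fin.cons_zero, Fin.cons_succ]
    simp_rw [lintegral_mul_const _ (hf 0)]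
    rw [lintegral_const_mul _ (by fun_prop), ih hm]

/-- A cycle with `n` edges of weight `q` and a closing edge of weight `r` contracts to a single loop
of weight `r * q ^ n`; leaving `r` free is what makes the induction on `n` go through. -/
lemma lintegral_cycle {q : ℝ} (hq0 : 0 ≤ q) (hq1 : q < 1) (n : ℕ) {r : ℝ} (hr0 : 0 ≤ r)
    (hr1 : r < 1) :
    ∫⁻ b : Fin (n + 1) → ℝ, (∏ i : Fin n, kernelE q (b i.castSucc) (b i.succ))
        * kernelE r (b (Fin.last n)) (b 0) ∂(Measure.pi fun _ => gaussianReal 0 1)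
      = ENNReal.ofReal (1 / (1 - r * q ^ n)) := by
  induction n generalizing r with
  | zero =>
    rw [lintegral_pi_cons _ (by fun_prop)]
    simp [lintegral_kernel_diag hr0 hr1]
  | succ n ih =>
    rw [lintegral_pi_cons _ (by fun_prop), pow_succ', ← mul_assoc,
      ← ih (mul_nonneg hr0 hq0) (by nlinarith)]
    refine lintegral_congr fun b => ?_
    rw [← lintegral_kernel_mul_kernel hr0 hr1 hq0 hq1, ← lintegral_const_mul _ (by fun_prop)]
    refine lintegral_congr fun x => ?_
    rw [Fin.prod_univ_succ, ← Fin.succ_last]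
    simp only [Fin.castSucc_zero, Fin.cons_zero, Fin.cons_succ, ← Fin.succ_castSucc]
    ring

/-- Proposition 1 of the paper, Gaussian case: for `ρ ∈ [0,1)`, `k ≥ 1`, and
`a₁,…,a_k, b₁,…,b_k` i.i.d. standard Gaussians,
`E[∏_{ℓ=1}^k L(a_ℓ, b_ℓ) L(a_ℓ, b_{ℓ+1})] = 1/(1 - ρ^{2k})` with cyclic indices
(`b_{k+1} = b₁`, here implemented by the cyclic rotation `finRotate`). -/
theorem stmt7 (ρ : ℝ) (hρ0 : 0 ≤ ρ) (hρ1 : ρ < 1) (k : ℕ) (hk : 1 ≤ k) :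
    (∫ ab : (Fin k → ℝ) × (Fin k → ℝ),
        ∏ ℓ : Fin k, Lgauss ρ (ab.1 ℓ) (ab.2 ℓ) * Lgauss ρ (ab.1 ℓ) (ab.2 (finRotate k ℓ))
        ∂((Measure.pi fun _ : Fin k => gaussianReal 0 1).prod
            (Measure.pi fun _ : Fin k => gaussianReal 0 1)))
      = 1 / (1 - ρ ^ (2 * k)) := by
  obtain ⟨n, rfl⟩ : ∃ n, k = n + 1 := ⟨k - 1, by omega⟩
  have hq0 : 0 ≤ ρ ^ 2 := sq_nonneg ρ
  have hq1 : ρ ^ 2 < 1 := by nlinarith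
  have hpow : ρ ^ (2 * (n + 1)) = ρ ^ 2 * (ρ ^ 2) ^ n := by rw [← pow_succ', pow_mul]
  have hlt : ρ ^ (2 * (n + 1)) < 1 := pow_lt_one₀ hρ0 hρ1 (by omega)
  rw [integral_eq_lintegral_of_nonneg_ae
    (Filter.Eventually.of_forall fun ab => Finset.prod_nonneg fun i _ =>
      mul_nonneg (Lgauss_nonneg _ _ _) (Lgauss_nonneg _ _ _))
    (Measurable.aestronglyMeasurable (by unfold Lgauss; fun_prop))]
  have hof (ab : (Fin (n + 1) → ℝ) × (Fin (n + 1) → ℝ)) :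
      ENNReal.ofReal (∏ ℓ : Fin (n + 1), Lgauss ρ (ab.1 ℓ) (ab.2 ℓ) *
          Lgauss ρ (ab.1 ℓ) (ab.2 (finRotate (n + 1) ℓ)))
        = ∏ ℓ : Fin (n + 1), kernelE ρ (ab.2 ℓ) (ab.1 ℓ) *
          kernelE ρ (ab.1 ℓ) (ab.2 (finRotate (n + 1) ℓ)) := by
    rw [ENNReal.ofReal_prod_of_nonneg fun i _ =>
      mul_nonneg (Lgauss_nonneg _ _ _) (Lgauss_nonneg _ _ _)]
    refine Finset.prod_congr rfl fun i _ => ?_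
    rw [ENNReal.ofReal_mul (Lgauss_nonneg _ _ _), kernelE_comm ρ (ab.2 i)]
    rfl
  simp_rw [hof]
  rw [lintegral_prod_symm' _ (by fun_prop)]
  have hinner (b : Fin (n + 1) → ℝ) :
      ∫⁻ a : Fin (n + 1) → ℝ, ∏ ℓ : Fin (n + 1), kernelE ρ (b ℓ) (a ℓ) *
          kernelE ρ (a ℓ) (b (finRotate (n + 1) ℓ)) ∂(Measure.pi fun _ => gaussianReal 0 1)
        = (∏ i : Fin n, kernelE (ρ ^ 2) (b i.castSucc) (b i.succ))
          * kernelE (ρ ^ 2) (b (Fin.last n)) (b 0) := by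
    rw [lintegral_pi_prod (gaussianReal 0 1)
      (f := fun ℓ x => kernelE ρ (b ℓ) x * kernelE ρ x (b (finRotate (n + 1) ℓ)))
      (fun i => by fun_prop)]
    simp_rw [lintegral_kernel_mul_kernel hρ0 hρ1 hρ0 hρ1, ← sq]
    rw [Fin.prod_univ_castSucc, finRotate_last]
    simp only [finRotate_apply, Fin.coeSucc_eq_succ]
  simp_rw [hinner]
  rw [lintegral_cycle hq0 hq1 n hq0 hq1, ← hpow, ENNReal.toReal_ofReal]
  exact div_nonneg zero_le_one (by linarith)

end
end

section
/- Fix p, s ∈ (0,1) and an integer k ≥ 1. Define L : {0,1} × {0,1} → ℝ by L(1,1) = 1/p, L(1,0) = L(0,1) = (1−s)/(1−ps), and L(0,0) = (1−2ps+ps²)/(1−ps)². Let a₁,…,a_k, b₁,…,b_k be 2k i.i.d. Bernoulli(ps) random variables. Then E[∏_{ℓ=1}^{k} L(a_ℓ, b_ℓ)·L(a_ℓ, b_{ℓ+1})] = 1 + ρ^{2k}, where ρ := s(1−p)/(1−ps) and indices are cyclic, i.e. b_{k+1} := b₁. -/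
/-!
Write `q = p * s` and let `ψ = 1_{x = 1} - q` be the centred Bernoulli(q) variable, of variance
`q * (1 - q)`. The kernel is `L(x, y) = 1 + ρ ψ(x) ψ(y) / (q (1 - q))`: the constant `1` and the
normalised `ψ` are orthonormal eigenfunctions of `L` in `L²(Bernoulli(q))`, with eigenvalues
`1` and `ρ`.

Given `b`, the variables `a_ℓ` are integrated out independently, which replaces each factor
`L(a_ℓ, b_ℓ) L(a_ℓ, b_{ℓ+1})` by the kernel of `L²`, evaluated at `(b_ℓ, b_{ℓ+1})`
(`integral_LER_mul_LER`). The remaining expectation over `b` is a sum over closed walks of length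
`k`, hence the trace of the `k`-th power of the `2 × 2` transfer matrix of `L²`
(`sum_cycle_eq_trace`), which has eigenvalues `1` and `ρ²`. The powers of this matrix are computed
explicitly in `transfer_pow`.
-/

open MeasureTheory ProbabilityTheory

noncomputable section

/-- The Bernoulli(p) distribution on `Bool` (a probability measure when `p ∈ [0,1]`). -/
def bern (p : ℝ) : Measure Bool :=
  ENNReal.ofReal p • Measure.dirac true + ENNReal.ofReal (1 - p) • Measure.dirac false

/-- The likelihood-ratio kernel of the correlated Bernoulli pair in the Erdős–Rényi model:
`L(1,1) = 1/p`, `L(1,0) = L(0,1) = (1-s)/(1-ps)`, `L(0,0) = (1-2ps+ps²)/(1-ps)²`. -/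
def LER (p s : ℝ) : Bool → Bool → ℝ
  | true, true => 1 / p
  | true, false => (1 - s) / (1 - p * s)
  | false, true => (1 - s) / (1 - p * s)
  | false, false => (1 - 2 * p * s + p * s ^ 2) / (1 - p * s) ^ 2

/-- The probability mass function of Bernoulli(q). -/
def bernMass (q : ℝ) (x : Bool) : ℝ := if x then q else 1 - q

/-- The centred Bernoulli(q) variable `1_{x = true} - q`. -/
def bernCentred (q : ℝ) (x : Bool) : ℝ := if x then 1 - q else -q

/-- The kernel on `Bool` with eigenvalues `1` (on constants) and `r` (on the centred variable)
with respect to Bernoulli(q). -/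
def spectralKernel (q r : ℝ) (x y : Bool) : ℝ :=
  1 + r * bernCentred q x * bernCentred q y / (q * (1 - q))

/-- The transfer matrix of `spectralKernel`: the Bernoulli(q) weight is attached to the row
index. -/
def transfer (q r : ℝ) : Matrix Bool Bool ℝ :=
  Matrix.of fun x y => bernMass q x * spectralKernel q r x y

lemma spectralKernel_comp {q : ℝ} (h0 : q ≠ 0) (h1 : 1 - q ≠ 0) (r t : ℝ) (x y : Bool) :
    ∑ z, bernMass q z * (spectralKernel q r x z * spectralKernel q t z y)
      = spectralKernel q (r * t) x y := by
  cases x <;> cases y <;>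
    simp only [Fintype.sum_bool, bernMass, spectralKernel, bernCentred, if_true, if_false,
      Bool.false_eq_true] <;> field_simp <;> ring

lemma transfer_pow {q : ℝ} (h0 : q ≠ 0) (h1 : 1 - q ≠ 0) (r : ℝ) (n : ℕ) :
    transfer q r ^ (n + 1) = transfer q (r ^ (n + 1)) := by
  induction n with
  | zero => simp
  | succ n ih =>
    rw [pow_succ, ih]
    ext x y
    rw [pow_succ r (n + 1)]
    simp only [Matrix.mul_apply, transfer, Matrix.of_apply]
    rw [← spectralKernel_comp h0 h1, Finset.mul_sum]
    exact Finset.sum_congr rfl fun z _ => by ring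

lemma trace_transfer {q : ℝ} (h0 : q ≠ 0) (h1 : 1 - q ≠ 0) (r : ℝ) :
    (transfer q r).trace = 1 + r := by
  simp only [Matrix.trace, Matrix.diag_apply, transfer, Matrix.of_apply, Fintype.sum_bool,
    bernMass, spectralKernel, bernCentred, if_true, if_false, Bool.false_eq_true]
  field_simp
  ring

lemma LER_eq_spectralKernel {p s : ℝ} (hp : p ≠ 0) (hs : s ≠ 0) (h1 : 1 - p * s ≠ 0)
    (x y : Bool) :
    LER p s x y = spectralKernel (p * s) (s * (1 - p) / (1 - p * s)) x y := by
  have h_ne : 1 - s * p ≠ 0 := by rwa [mul_comm]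
  cases x <;> cases y <;>
    simp only [LER, spectralKernel, bernCentred, if_true, if_false, Bool.false_eq_true] <;>
    field_simp <;> ring

/-- Entries of a matrix power as sums over walks from `x` to `y`; `b` lists the `n` interior
vertices of the walk. -/
lemma sum_walk_eq_pow {α : Type*} [Fintype α] [DecidableEq α] (T : Matrix α α ℝ) (n : ℕ)
    (x y : α) :
    ∑ b : Fin n → α, ∏ i : Fin (n + 1),
        T (Fin.cons (α := fun _ => α) x b i) (Fin.snoc (α := fun _ => α) b y i)
      = (T ^ (n + 1)) x y := by
  induction n generalizing x with
  | zero => simp [Fin.snoc]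
  | succ n ih =>
    rw [pow_succ', Matrix.mul_apply, ← (Fin.consEquiv fun _ : Fin (n + 1) => α).sum_comp,
      Fintype.sum_prod_type]
    refine Finset.sum_congr rfl fun c _ => ?_
    rw [← ih, Finset.mul_sum]
    refine Finset.sum_congr rfl fun b _ => ?_
    rw [Fin.prod_univ_succ]
    have hb : Fin.snoc (α := fun _ => α) ((Fin.consEquiv fun _ : Fin (n + 1) => α) (c, b)) y
        = Fin.cons (α := fun _ => α) c (Fin.snoc (α := fun _ => α) b y) :=
      (Fin.cons_snoc_eq_snoc_cons c b y).symm
    simp only [hb, Fin.cons_zero, Fin.cons_succ, Fin.consEquiv_apply]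

lemma sum_cycle_eq_trace {α : Type*} [Fintype α] [DecidableEq α] (T : Matrix α α ℝ) (n : ℕ) :
    ∑ b : Fin (n + 1) → α, ∏ i, T (b i) (b (finRotate (n + 1) i)) = (T ^ (n + 1)).trace := by
  rw [← (Fin.consEquiv fun _ : Fin (n + 1) => α).sum_comp, Fintype.sum_prod_type]
  refine Finset.sum_congr rfl fun x _ => ?_
  rw [Matrix.diag_apply, ← sum_walk_eq_pow]
  refine Finset.sum_congr rfl fun b _ => ?_
  simp only [Fin.consEquiv_apply, Fin.snoc_eq_cons_rotate]

instance isFiniteMeasure_bern (q : ℝ) : IsFiniteMeasure (bern q) := by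
  refine ⟨?_⟩
  simp [bern]

lemma bern_real_singleton {q : ℝ} (h0 : 0 ≤ q) (h1 : q ≤ 1) (x : Bool) :
    (bern q).real {x} = bernMass q x := by
  have h_nonneg : 0 ≤ 1 - q := sub_nonneg.mpr h1
  cases x <;> simp [bern, bernMass, Measure.real, h0, h_nonneg]

/-- Integrating out one `a`-variable composes the kernel with itself. -/
lemma integral_LER_mul_LER {p s : ℝ} (hp : p ≠ 0) (hs : s ≠ 0) (h0 : 0 ≤ p * s)
    (h1 : p * s < 1) (x y : Bool) :
    ∫ a, LER p s a x * LER p s a y ∂(bern (p * s))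
      = spectralKernel (p * s) ((s * (1 - p) / (1 - p * s)) ^ 2) x y := by
  have h_ne : 1 - p * s ≠ 0 := (sub_pos.mpr h1).ne'
  rw [integral_fintype Integrable.of_finite, sq,
    ← spectralKernel_comp (mul_ne_zero hp hs) h_ne]
  refine Finset.sum_congr rfl fun a _ => ?_
  rw [bern_real_singleton h0 h1.le, smul_eq_mul, LER_eq_spectralKernel hp hs h_ne,
    LER_eq_spectralKernel hp hs h_ne]
  simp only [spectralKernel]
  ring

/-- Proposition 1 of the paper, Erdős–Rényi case: for `p, s ∈ (0,1)`, `k ≥ 1`,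
and `a₁,…,a_k, b₁,…,b_k` i.i.d. Bernoulli(ps),
`E[∏_{ℓ=1}^k L(a_ℓ, b_ℓ) L(a_ℓ, b_{ℓ+1})] = 1 + ρ^{2k}` where `ρ = s(1-p)/(1-ps)`, with cyclic
indices (`b_{k+1} = b₁`, here implemented by the cyclic rotation `finRotate`). -/
theorem stmt8 (p s : ℝ) (hp : p ∈ Set.Ioo (0 : ℝ) 1) (hs : s ∈ Set.Ioo (0 : ℝ) 1)
    (k : ℕ) (hk : 1 ≤ k) :
    (∫ ab : (Fin k → Bool) × (Fin k → Bool),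
        ∏ ℓ : Fin k, LER p s (ab.1 ℓ) (ab.2 ℓ) * LER p s (ab.1 ℓ) (ab.2 (finRotate k ℓ))
        ∂((Measure.pi fun _ : Fin k => bern (p * s)).prod
            (Measure.pi fun _ : Fin k => bern (p * s))))
      = 1 + (s * (1 - p) / (1 - p * s)) ^ (2 * k) := by
  obtain ⟨n, rfl⟩ : ∃ n, k = n + 1 := ⟨k - 1, by omega⟩
  have hp0 : p ≠ 0 := hp.1.ne'
  have hs0 : s ≠ 0 := hs.1.ne'
  have h0 : 0 < p * s := mul_pos hp.1 hs.1
  have h1 : p * s < 1 := mul_lt_one_of_nonneg_of_lt_one_left hp.1.le hp.2 hs.2.le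
  have h_ne : 1 - p * s ≠ 0 := (sub_pos.mpr h1).ne'
  rw [integral_prod_symm _ Integrable.of_finite]
  have inner (b : Fin (n + 1) → Bool) :
      ∫ a : Fin (n + 1) → Bool,
          ∏ ℓ, LER p s (a ℓ) (b ℓ) * LER p s (a ℓ) (b (finRotate (n + 1) ℓ))
          ∂(Measure.pi fun _ : Fin (n + 1) => bern (p * s))
        = ∏ ℓ, spectralKernel (p * s) ((s * (1 - p) / (1 - p * s)) ^ 2)
            (b ℓ) (b (finRotate (n + 1) ℓ)) := by
    rw [integral_fintype_prod_eq_prod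
      (f := fun ℓ x => LER p s x (b ℓ) * LER p s x (b (finRotate (n + 1) ℓ)))]
    exact Finset.prod_congr rfl fun ℓ _ => integral_LER_mul_LER hp0 hs0 h0.le h1 _ _
  simp only [inner]
  rw [integral_fintype Integrable.of_finite, pow_mul, ← trace_transfer h0.ne' h_ne,
    ← transfer_pow h0.ne' h_ne, ← sum_cycle_eq_trace]
  refine Finset.sum_congr rfl fun b _ => ?_
  have hb : (Measure.pi fun _ : Fin (n + 1) => bern (p * s)).real {b}
      = ∏ ℓ, bernMass (p * s) (b ℓ) := by
    rw [Measure.real, Measure.pi_singleton, ENNReal.toReal_prod]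
    exact Finset.prod_congr rfl fun ℓ _ => bern_real_singleton h0.le h1.le _
  rw [hb, smul_eq_mul, ← Finset.prod_mul_distrib]
  rfl

end
end

section
/- For every n ≥ 2, every permutation σ of [n], every integer k ≥ 1, and every ρ ∈ [0,1], one has ∏_O (1 + ρ^{2|O|}) ≤ (1 + ρ^k)^{n²/k}, where the product ranges over all edge orbits O of the induced edge permutation σ^E that do NOT belong to O_k, and the right-hand side is the real power with exponent n²/k. (Equivalently, in the correlated Erdős–Rényi model this bounds the null expectation of the product of X_O over all long edge orbits, since each factor equals 1 + ρ^{2|O|}.) -/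
/-!
The proof compares each factor with a power of `1 + ρ ^ k` and counts edges.

A long edge orbit `O` satisfies `k ≤ 2 * |O|`: either `|O| > k`, or some `{i, j} ∈ O` has a node
orbit `O_i` with more than `k` elements, and the edges of `O`, having two endpoints each, cover
`O_i` (`nodeOrbitSize_le`). With `p = 2 * |O| / k ≥ 1` and `y = ρ ^ k`, superadditivity of
`t ↦ t ^ p` gives `1 + y ^ p ≤ (1 + y) ^ p`, that is `1 + ρ ^ (2 * |O|) ≤ (1 + ρ ^ k) ^ p`
(`factor_le`). In the product the exponents add up to at most
`2 * (n choose 2) / k ≤ n ^ 2 / k`, because distinct orbits are disjoint (`sum_card_le`).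
-/

open Filter
open scoped Classical

noncomputable section

/-- The set of potential edges on `n` vertices: unordered pairs of distinct elements of `Fin n`. -/
abbrev Edge (n : ℕ) := {e : Sym2 (Fin n) // ¬ e.IsDiag}

/-- The edge permutation `σ^E` induced by a node permutation `σ`:
`σ^E({i,j}) = {σ(i), σ(j)}`. -/
def edgePerm {n : ℕ} (σ : Equiv.Perm (Fin n)) : Equiv.Perm (Edge n) where
  toFun e := ⟨Sym2.map σ e.1, fun h => e.2 ((Sym2.isDiag_map σ.injective).mp h)⟩
  invFun e := ⟨Sym2.map σ.symm e.1, fun h => e.2 ((Sym2.isDiag_map σ.symm.injective).mp h)⟩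
  left_inv e := by
    ext : 1
    simp [Sym2.map_map, Function.comp_def]
  right_inv e := by
    ext : 1
    simp [Sym2.map_map, Function.comp_def]

/-- The size of the node orbit of `i` under `σ` (the length of the cycle of `σ` containing `i`). -/
def nodeOrbitSize {n : ℕ} (σ : Equiv.Perm (Fin n)) (i : Fin n) : ℕ :=
  (Finset.univ.filter fun j => σ.SameCycle i j).card

/-- The edge orbit of an edge `e` under the edge permutation induced by `σ`. -/
def edgeOrbit {n : ℕ} (σ : Equiv.Perm (Fin n)) (e : Edge n) : Finset (Edge n) :=
  Finset.univ.filter fun f => (edgePerm σ).SameCycle e f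

/-- The collection of all edge orbits of the edge permutation induced by `σ`. -/
def edgeOrbits {n : ℕ} (σ : Equiv.Perm (Fin n)) : Finset (Finset (Edge n)) :=
  Finset.univ.image fun e => edgeOrbit σ e

/-- Membership of the edge orbit of `e = {i,j}` in `O_k`: both node orbits `O_i`, `O_j` have
length at most `k` and the edge orbit `O_{ij}` has length at most `k`. -/
def memOk {n : ℕ} (σ : Equiv.Perm (Fin n)) (k : ℕ) (e : Edge n) : Prop :=
  (∀ i ∈ e.1, nodeOrbitSize σ i ≤ k) ∧ (edgeOrbit σ e).card ≤ k

lemma edgePerm_pow_val {n : ℕ} (σ : Equiv.Perm (Fin n)) (m : ℕ) (e : Edge n) :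
    ((edgePerm σ ^ m) e).1 = Sym2.map (σ ^ m : Equiv.Perm (Fin n)) e.1 := by
  induction m with
  | zero => simp
  | succ m ih =>
    rw [pow_succ', pow_succ', Equiv.Perm.mul_apply]
    change Sym2.map σ ((edgePerm σ ^ m) e).1 = _
    rw [ih, Sym2.map_map]
    rfl

lemma edgeOrbit_eq_of_sameCycle {n : ℕ} (σ : Equiv.Perm (Fin n)) {e f : Edge n}
    (h : (edgePerm σ).SameCycle e f) : edgeOrbit σ e = edgeOrbit σ f := by
  ext g
  simp only [edgeOrbit, Finset.mem_filter, Finset.mem_univ, true_and]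
  exact ⟨fun hg => h.symm.trans hg, fun hg => h.trans hg⟩

/-- The edges in the orbit of `e` cover the node orbit of each endpoint of `e`, and an edge has
only two endpoints. -/
lemma nodeOrbitSize_le {n : ℕ} (σ : Equiv.Perm (Fin n)) (e : Edge n) (i : Fin n)
    (hi : i ∈ e.1) : nodeOrbitSize σ i ≤ 2 * (edgeOrbit σ e).card := by
  have hsub : (Finset.univ.filter fun j => σ.SameCycle i j) ⊆
      (edgeOrbit σ e).biUnion (fun f => f.1.toFinset) := by
    intro j hj
    obtain ⟨m, hm⟩ := (Finset.mem_filter.mp hj).2.exists_nat_pow_eq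
    refine Finset.mem_biUnion.mpr ⟨(edgePerm σ ^ m) e, ?_, ?_⟩
    · exact Finset.mem_filter.mpr ⟨Finset.mem_univ _, (m : ℤ), by simp⟩
    · rw [Sym2.mem_toFinset, edgePerm_pow_val, Sym2.mem_map]
      exact ⟨i, hi, hm⟩
  calc nodeOrbitSize σ i ≤ _ := Finset.card_le_card hsub
    _ ≤ (edgeOrbit σ e).card * 2 :=
        Finset.card_biUnion_le_card_mul _ _ _ fun f _ =>
          (Sym2.card_toFinset_of_not_isDiag _ f.2).le
    _ = _ := mul_comm _ _

lemma le_two_mul_card {n : ℕ} (σ : Equiv.Perm (Fin n)) (k : ℕ) {O : Finset (Edge n)}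
    (hO : O ∈ edgeOrbits σ) (hlong : ¬ ∀ e ∈ O, memOk σ k e) : k ≤ 2 * O.card := by
  obtain ⟨e₀, -, rfl⟩ := Finset.mem_image.mp hO
  push Not at hlong
  obtain ⟨e, he, hmem⟩ := hlong
  rw [edgeOrbit_eq_of_sameCycle σ (Finset.mem_filter.mp he).2]
  by_contra hlt
  exact hmem ⟨fun i hi => (nodeOrbitSize_le σ e i hi).trans (by omega), by omega⟩

lemma sum_card_le {n : ℕ} (σ : Equiv.Perm (Fin n)) {S : Finset (Finset (Edge n))}
    (hS : S ⊆ edgeOrbits σ) : ∑ O ∈ S, 2 * O.card ≤ n ^ 2 := by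
  have hdisj : (S : Set (Finset (Edge n))).PairwiseDisjoint id := by
    intro O₁ h₁ O₂ h₂ hne
    obtain ⟨e₁, -, rfl⟩ := Finset.mem_image.mp (hS h₁)
    obtain ⟨e₂, -, rfl⟩ := Finset.mem_image.mp (hS h₂)
    refine Finset.disjoint_left.mpr fun f hf₁ hf₂ => hne ?_
    exact edgeOrbit_eq_of_sameCycle σ
      ((Finset.mem_filter.mp hf₁).2.trans (Finset.mem_filter.mp hf₂).2.symm)
  have hsum : ∑ O ∈ S, O.card ≤ n.choose 2 := by
    calc ∑ O ∈ S, O.card = (S.biUnion id).card := (Finset.card_biUnion hdisj).symm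
      _ ≤ Fintype.card (Edge n) := Finset.card_le_univ _
      _ = n.choose 2 := by
        have h := Sym2.card_subtype_not_diag (α := Fin n)
        rw [Fintype.card_fin] at h
        convert h
  rw [← Finset.mul_sum]
  have h2 : 2 * n.choose 2 ≤ n * (n - 1) := by
    rw [Nat.choose_two_right]
    exact Nat.mul_div_le _ _
  calc 2 * ∑ O ∈ S, O.card ≤ 2 * n.choose 2 := Nat.mul_le_mul_left 2 hsum
    _ ≤ n * (n - 1) := h2
    _ ≤ n * n := Nat.mul_le_mul_left n (Nat.sub_le n 1)
    _ = n ^ 2 := (sq n).symm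

/-- The case `y = ρ ^ k`, `p = m / k` of `1 + y ^ p ≤ (1 + y) ^ p`. -/
lemma factor_le {k m : ℕ} (hk : 1 ≤ k) (hkm : k ≤ m) {ρ : ℝ} (hρ : 0 ≤ ρ) :
    1 + ρ ^ m ≤ (1 + ρ ^ k) ^ ((m : ℝ) / k) := by
  have hk' : (0 : ℝ) < k := by exact_mod_cast hk
  have hp : (1 : ℝ) ≤ (m : ℝ) / k := by
    rw [le_div_iff₀ hk', one_mul]
    exact_mod_cast hkm
  have h := Real.add_rpow_le_rpow_add zero_le_one (pow_nonneg hρ k) hp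
  rwa [Real.one_rpow, ← Real.rpow_natCast_mul hρ, mul_div_cancel₀ _ hk'.ne',
    Real.rpow_natCast] at h

/-- Proposition 3 of the paper: for every `n ≥ 2`, permutation `σ` of `[n]`,
`k ≥ 1`, and `ρ ∈ [0,1]`, the product of `1 + ρ^{2|O|}` over all edge orbits `O` of `σ^E` not
belonging to `O_k` is at most `(1 + ρ^k)^{n²/k}` (real power). -/
theorem stmt11 (n : ℕ) (hn : 2 ≤ n) (σ : Equiv.Perm (Fin n)) (k : ℕ) (hk : 1 ≤ k)
    (ρ : ℝ) (hρ : ρ ∈ Set.Icc (0 : ℝ) 1) :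
    (∏ O ∈ (edgeOrbits σ).filter (fun O => ¬ ∀ e ∈ O, memOk σ k e), (1 + ρ ^ (2 * O.card)))
      ≤ (1 + ρ ^ k) ^ ((n : ℝ) ^ 2 / (k : ℝ)) := by
  have hbase : 1 ≤ 1 + ρ ^ k := le_add_of_nonneg_right (pow_nonneg hρ.1 k)
  set S := (edgeOrbits σ).filter (fun O => ¬ ∀ e ∈ O, memOk σ k e) with hS
  calc ∏ O ∈ S, (1 + ρ ^ (2 * O.card))
      ≤ ∏ O ∈ S, (1 + ρ ^ k) ^ (((2 * O.card : ℕ) : ℝ) / k) := by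
        refine Finset.prod_le_prod (fun O _ => ?_) (fun O hO => ?_)
        · exact add_nonneg zero_le_one (pow_nonneg hρ.1 _)
        · have hO' := Finset.mem_filter.mp hO
          exact factor_le hk (le_two_mul_card σ k hO'.1 hO'.2) hρ.1
    _ = (1 + ρ ^ k) ^ (∑ O ∈ S, ((2 * O.card : ℕ) : ℝ) / k) :=
        (Real.rpow_sum_of_pos (by linarith) _ _).symm
    _ ≤ (1 + ρ ^ k) ^ ((n : ℝ) ^ 2 / (k : ℝ)) := by
        refine Real.rpow_le_rpow_of_exponent_le hbase ?_
        rw [← Finset.sum_div]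
        have h := sum_card_le σ (Finset.filter_subset _ _ : S ⊆ edgeOrbits σ)
        gcongr
        exact_mod_cast h

end
end

section
/- For all real p, s with 0 ≤ p ≤ 1/2 and 0 ≤ s ≤ 1/2, and every integer m ≥ 1: 1 − ((1−p)/(1−ps))^{2m} ≥ p^{2m}. Consequently, setting ρ := s(1−p)/(1−ps), one has (1 + ρ^{2m} − s^{2m})/(1 − (ps)^{2m}) ≤ 1. -/
/-!
Write `r = (1 - p) / (1 - p * s)`. The first claim `p ^ (2m) + r ^ (2m) ≤ 1` reduces to `m = 1`,
since `p ^ 2` and `r ^ 2` lie in `[0, 1]` and so decrease when raised to the power `m`. For `m = 1`,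
cancelling `1 - p` leaves `1 - p ≤ (1 + p) * (1 - p * s) ^ 2`, whose right side is smallest at
`s = 1/2`, where it is a cubic inequality in `p`. The second claim is the first multiplied by
`s ^ (2m)`, because `ρ = s * r`.
-/

/-- Proposition 4 of the paper, incomplete orbits: for `0 ≤ p ≤ 1/2`,
`0 ≤ s ≤ 1/2`, and every integer `m ≥ 1`, one has `1 - ((1-p)/(1-ps))^{2m} ≥ p^{2m}`;
consequently, with `ρ = s(1-p)/(1-ps)`, `(1 + ρ^{2m} - s^{2m})/(1 - (ps)^{2m}) ≤ 1`. -/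
theorem stmt12 (p s : ℝ) (hp0 : 0 ≤ p) (hp : p ≤ 1 / 2) (hs0 : 0 ≤ s) (hs : s ≤ 1 / 2)
    (m : ℕ) (hm : 1 ≤ m) :
    p ^ (2 * m) ≤ 1 - ((1 - p) / (1 - p * s)) ^ (2 * m) ∧
    (1 + (s * (1 - p) / (1 - p * s)) ^ (2 * m) - s ^ (2 * m)) / (1 - (p * s) ^ (2 * m)) ≤ 1 := by
  have hps : p * s ≤ 1 / 4 := by nlinarith
  have hps0 : 0 ≤ p * s := mul_nonneg hp0 hs0
  have hd : 0 < 1 - p * s := by linarith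
  have hsq : p ^ 2 + ((1 - p) / (1 - p * s)) ^ 2 ≤ 1 := by
    have hps' : p * s ≤ p / 2 := by nlinarith
    have hmono : (1 - p / 2) ^ 2 ≤ (1 - p * s) ^ 2 :=
      pow_le_pow_left₀ (by linarith) (by linarith) 2
    -- The extreme case `s = 1/2`, with the common factor `1 - p` cancelled.
    have hhalf : 1 - p ≤ (1 + p) * (1 - p / 2) ^ 2 := by
      nlinarith [mul_nonneg hp0 (sq_nonneg p), mul_nonneg hp0 (by linarith : 0 ≤ 1 / 2 - p)]
    have hkey : 1 - p ≤ (1 + p) * (1 - p * s) ^ 2 :=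
      hhalf.trans (mul_le_mul_of_nonneg_left hmono (by linarith))
    have hr : ((1 - p) / (1 - p * s)) ^ 2 ≤ 1 - p ^ 2 := by
      rw [div_pow, div_le_iff₀ (by positivity)]
      nlinarith [mul_le_mul_of_nonneg_left hkey (by linarith : 0 ≤ 1 - p)]
    linarith
  have hfirst : p ^ (2 * m) + ((1 - p) / (1 - p * s)) ^ (2 * m) ≤ 1 := by
    have h1 := pow_le_of_le_one (sq_nonneg p)
      (by linarith [sq_nonneg ((1 - p) / (1 - p * s))]) (by omega : m ≠ 0)
    have h2 := pow_le_of_le_one (sq_nonneg ((1 - p) / (1 - p * s)))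
      (by linarith [sq_nonneg p]) (by omega : m ≠ 0)
    rw [pow_mul, pow_mul]
    linarith
  refine ⟨by linarith, ?_⟩
  have hden : (p * s) ^ (2 * m) < 1 := pow_lt_one₀ hps0 (by linarith) (by omega)
  rw [div_le_one (by linarith), mul_div_assoc, mul_pow, mul_pow]
  -- This is the first inequality multiplied by `s ^ (2 * m)`.
  nlinarith [mul_le_mul_of_nonneg_left hfirst (pow_nonneg hs0 (2 * m))]
end

section
/- Let σ be a uniformly random permutation of [n] and n_m the number of m-cycles of σ. Let k = k_n be a sequence of positive integers with k_n·(log k_n)^4 = o(n), and let s = s_n ∈ [0,1]. Define F_n := ∏_{m=1}^{k_n} (1 + s^m·n_m·1{m even} + 2·s^{2m}·∑_{ℓ=1}^{m} ℓ·n_ℓ + s^{4m}·m·n_{2m}·1{2m ≤ k_n})^{n_m}. If s_n ≤ 0.1 for all n, then sup_n E[F_n] < ∞ (i.e. E[F_n] = O(1)). If moreover s_n → 0, then E[F_n] → 1 as n → ∞. -/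
/-!
Write `n_m` for the number of `m`-cycles of a uniform permutation of `[n]`.

As a polynomial in `s`, `F` has nonnegative coefficients and constant term `1`. Hence
`0 ≤ F(s) - 1 ≤ 10 s (F(1/10) - 1)` for `0 ≤ s ≤ 1/10` (`Fprod_growth`), and both claims follow
from a bound on `E[F(1/10)]` that is uniform in `n` and `k` (`exists_bound`).

To obtain it, let `1 + x_m` be the base of the `m`-th factor, where `x_m` is linear in the cycle
counts. For `b ≥ 2`, one term of the exponential series gives `(1 + x)^b ≤ e² b! 2^{-b} e^{2x}`,
while `(1 + x)^b ≤ e^{2x}` for `b ≤ 1` (`one_add_pow_le`). In the product over `m` the exponents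
add up to `2 ∑ x_m ≤ ∑ θ_ℓ n_ℓ` with `θ_ℓ = O(1/ℓ)` (`sum_excess_le`), so `F(1/10)` is dominated by
a product of functions of the individual counts. Each of these is at most
`1 + O(1/m) n_m + e² ∑_{j ≥ 2} (7/10)^j (n_m)_j`, with `(n_m)_j` the falling factorial
(`penalty_mul_le`).

Joint factorial moments satisfy `E[∏ (n_m)_{j_m}] ≤ ∏ m^{-j_m}`: the class of cycle type `M` has
probability `1 / z_M`, and adjoining `j` parts `m` to a partition changes `z` by the factor
`m^j (n_m + j)_j` (`typeAvg_descFactorial_le`, `typeAvg_prod_le`). Expanding the product,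
`E[F(1/10)] ≤ ∏ (1 + O(1/m²))`, which is bounded (`sum_coef_le`).
-/

open Filter

noncomputable section

/-- The number of `j`-cycles in the cycle decomposition of a permutation `σ` of `Fin n`
(for `j = 1`, the number of fixed points). -/
def cycleCount {n : ℕ} (σ : Equiv.Perm (Fin n)) (j : ℕ) : ℕ :=
  if j = 1 then (Finset.univ.filter fun x => σ x = x).card
  else σ.cycleType.count j

/-- Expectation of `f(σ)` for `σ` drawn uniformly at random from the symmetric group on `[n]`. -/
def permAvg (n : ℕ) (f : Equiv.Perm (Fin n) → ℝ) : ℝ :=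
  (∑ σ : Equiv.Perm (Fin n), f σ) / Fintype.card (Equiv.Perm (Fin n))

/-- The random quantity `F_n(σ)` of Proposition 5:
`∏_{m=1}^{k} (1 + s^m n_m 1{m even} + 2 s^{2m} ∑_{ℓ=1}^m ℓ n_ℓ + s^{4m} m n_{2m} 1{2m ≤ k})^{n_m}`. -/
def Fprod {n : ℕ} (k : ℕ) (s : ℝ) (σ : Equiv.Perm (Fin n)) : ℝ :=
  ∏ m ∈ Finset.Icc 1 k,
    (1 + s ^ m * (cycleCount σ m : ℝ) * (if Even m then 1 else 0)
      + 2 * s ^ (2 * m) * (∑ ℓ ∈ Finset.Icc 1 m, (ℓ : ℝ) * (cycleCount σ ℓ : ℝ))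
      + s ^ (4 * m) * (m : ℝ) * (cycleCount σ (2 * m) : ℝ) * (if 2 * m ≤ k then 1 else 0))
    ^ (cycleCount σ m)

/-! ### Cycle types and partitions -/

/-- The partitions of `n`, as multisets of positive integers. -/
def partsSet (n : ℕ) : Finset (Multiset ℕ) :=
  (Finset.univ : Finset n.Partition).image Nat.Partition.parts

lemma mem_partsSet {n : ℕ} {M : Multiset ℕ} :
    M ∈ partsSet n ↔ M.sum = n ∧ ∀ i ∈ M, 0 < i := by
  simp only [partsSet, Finset.mem_image, Finset.mem_univ, true_and]
  constructor
  · rintro ⟨p, rfl⟩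
    exact ⟨p.parts_sum, fun i hi => p.parts_pos hi⟩
  · rintro ⟨h1, h2⟩
    exact ⟨⟨M, fun hi => h2 _ hi, h1⟩, rfl⟩

/-- The centralizer order `z_M = ∏ i ^ {a_i} a_i!` of a permutation with `a_i` cycles of
length `i`. -/
def zWeight (M : Multiset ℕ) : ℕ := M.prod * ∏ i ∈ M.toFinset, (M.count i).factorial

lemma zWeight_pos {M : Multiset ℕ} (h : ∀ i ∈ M, 0 < i) : 0 < zWeight M := by
  have : 0 < M.prod := Multiset.prod_pos h
  unfold zWeight
  positivity

lemma zWeight_add_replicate (M : Multiset ℕ) (j m : ℕ) :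
    zWeight (M + Multiset.replicate j m)
      = zWeight M * (m ^ j * (M.count m + j).descFactorial j) := by
  have ext : ∀ K : Multiset ℕ, K.toFinset ⊆ insert m M.toFinset →
      ∏ i ∈ K.toFinset, (K.count i).factorial
        = (K.count m).factorial * ∏ i ∈ M.toFinset.erase m, (K.count i).factorial := by
    intro K hK
    rw [Finset.prod_subset hK]
    · have : insert m M.toFinset = insert m (M.toFinset.erase m) := by
        ext i; by_cases h : i = m <;> simp [h]
      rw [this, Finset.prod_insert (by simp)]
    · intro i _ hi
      rw [Multiset.count_eq_zero_of_notMem (by simpa using hi), Nat.factorial_zero]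
  have h1 := ext M (Finset.subset_insert _ _)
  have h2 := ext (M + Multiset.replicate j m) (by
    intro i hi
    simp only [Multiset.mem_toFinset, Multiset.mem_add, Multiset.mem_replicate] at hi
    simp only [Finset.mem_insert, Multiset.mem_toFinset]
    tauto)
  have h3 : ∏ i ∈ M.toFinset.erase m, ((M + Multiset.replicate j m).count i).factorial
      = ∏ i ∈ M.toFinset.erase m, (M.count i).factorial := by
    refine Finset.prod_congr rfl fun i hi => ?_
    have : m ≠ i := fun h => (Finset.mem_erase.1 hi).1 h.symm
    simp [Multiset.count_replicate, this]
  have h4 := Nat.factorial_mul_descFactorial (Nat.le_add_left j (M.count m))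
  unfold zWeight
  rw [h1, h2, h3]
  simp only [Multiset.count_add, Multiset.count_replicate_self, Multiset.prod_add,
    Multiset.prod_replicate]
  rw [← h4, Nat.add_sub_cancel]
  ring

/-- All cycle lengths of `σ`, fixed points included as cycles of length one. -/
def fullType {n : ℕ} (σ : Equiv.Perm (Fin n)) : Multiset ℕ :=
  σ.cycleType + Multiset.replicate (n - σ.cycleType.sum) 1

lemma count_one_cycleType {n : ℕ} (σ : Equiv.Perm (Fin n)) : σ.cycleType.count 1 = 0 := by
  rw [Multiset.count_eq_zero]
  intro h
  exact absurd (Equiv.Perm.two_le_of_mem_cycleType h) (by norm_num)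

lemma cycleCount_eq {n : ℕ} (σ : Equiv.Perm (Fin n)) (j : ℕ) :
    cycleCount σ j = (fullType σ).count j := by
  unfold cycleCount fullType
  split_ifs with h
  · subst h
    have := Equiv.Perm.card_fixedPoints σ
    rw [Fintype.card_fin] at this
    rw [Multiset.count_add, count_one_cycleType, Multiset.count_replicate_self, zero_add, ← this,
      Fintype.card_subtype]
    rfl
  · have : 1 ≠ j := fun h' => h h'.symm
    simp [Multiset.count_replicate, this]

lemma fullType_mem {n : ℕ} (σ : Equiv.Perm (Fin n)) : fullType σ ∈ partsSet n := by
  have h := Equiv.Perm.sum_cycleType_le σ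
  rw [Fintype.card_fin] at h
  rw [mem_partsSet]
  constructor
  · simp [fullType, h]
  · intro i hi
    rcases Multiset.mem_add.1 hi with hi | hi
    · exact zero_lt_two.trans_le (Equiv.Perm.two_le_of_mem_cycleType hi)
    · rw [Multiset.eq_of_mem_replicate hi]; norm_num

/-- The class of permutations with cycle lengths `M` has `n! / z_M` elements. -/
lemma card_fullType {n : ℕ} {M : Multiset ℕ} (hM : M ∈ partsSet n) :
    (Finset.univ.filter fun σ : Equiv.Perm (Fin n) => fullType σ = M).card * zWeight M
      = n.factorial := by
  rw [mem_partsSet] at hM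
  obtain ⟨hs, hp⟩ := hM
  set A := M.filter (2 ≤ ·) with hA
  have hM1 : M = A + Multiset.replicate (M.count 1) 1 := by
    conv_lhs => rw [← Multiset.filter_add_not (2 ≤ ·) M]
    congr 1
    rw [← Multiset.filter_eq']
    refine Multiset.filter_congr fun i hi => ?_
    have := hp i hi
    omega
  have hc : M.count 1 = n - A.sum ∧ A.sum ≤ n := by
    have := congrArg Multiset.sum hM1
    simp only [Multiset.sum_add, Multiset.sum_replicate, hs, smul_eq_mul, mul_one] at this
    omega
  have hA2 : ∀ a ∈ A, 2 ≤ a := fun a ha => (Multiset.mem_filter.1 ha).2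
  have hA1 : A.count 1 = 0 := by
    rw [Multiset.count_eq_zero]
    intro h
    exact absurd (hA2 1 h) (by norm_num)
  have hset : (Finset.univ.filter fun σ : Equiv.Perm (Fin n) => fullType σ = M)
      = Finset.univ.filter fun σ : Equiv.Perm (Fin n) => σ.cycleType = A := by
    refine Finset.filter_congr fun σ _ => ⟨fun h => ?_, fun h => ?_⟩
    · rw [hA, ← h, fullType, Multiset.filter_add,
        Multiset.filter_eq_self.2 fun _ => Equiv.Perm.two_le_of_mem_cycleType,
        Multiset.filter_eq_nil.2, add_zero]
      intro a ha
      rw [Multiset.eq_of_mem_replicate ha]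
      norm_num
    · rw [hM1, fullType, h, hc.1]
  have key := Equiv.Perm.card_of_cycleType_mul_eq (Fin n) A
  rw [Fintype.card_fin, if_pos ⟨hc.2, hA2⟩] at key
  rw [hset, ← key, hM1, zWeight_add_replicate, hA1, hc.1, zero_add, Nat.descFactorial_self,
    one_pow, zWeight]
  ring

/-- The mean of a function of the cycle type, computed class by class. -/
def typeAvg (n : ℕ) (g : Multiset ℕ → ℝ) : ℝ := ∑ M ∈ partsSet n, g M / zWeight M

lemma permAvg_fullType (n : ℕ) (g : Multiset ℕ → ℝ) :
    permAvg n (fun σ => g (fullType σ)) = typeAvg n g := by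
  unfold permAvg typeAvg
  rw [Fintype.card_perm, Fintype.card_fin,
    ← Finset.sum_fiberwise_of_maps_to (fun σ _ => fullType_mem σ), Finset.sum_div]
  refine Finset.sum_congr rfl fun M hM => ?_
  have h1 : ∑ σ ∈ Finset.univ.filter (fun σ : Equiv.Perm (Fin n) => fullType σ = M),
      g (fullType σ)
      = ((Finset.univ.filter fun σ : Equiv.Perm (Fin n) => fullType σ = M).card : ℝ) * g M := by
    rw [← nsmul_eq_mul]
    refine Finset.sum_eq_card_nsmul fun σ hσ => ?_
    rw [(Finset.mem_filter.1 hσ).2]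
  have h2 : ((Finset.univ.filter fun σ : Equiv.Perm (Fin n) => fullType σ = M).card : ℝ)
      * zWeight M = n.factorial := by exact_mod_cast card_fullType hM
  have h3 : (zWeight M : ℝ) ≠ 0 := by
    exact_mod_cast (zWeight_pos (mem_partsSet.1 hM).2).ne'
  have h4 : (n.factorial : ℝ) ≠ 0 := by exact_mod_cast n.factorial_ne_zero
  rw [h1, div_eq_div_iff h4 h3, ← h2]
  ring

lemma typeAvg_one (n : ℕ) : typeAvg n (fun _ => 1) = 1 := by
  rw [← permAvg_fullType]
  have : (Fintype.card (Equiv.Perm (Fin n)) : ℝ) ≠ 0 := by exact_mod_cast Fintype.card_ne_zero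
  simp only [permAvg, Finset.sum_const, Finset.card_univ, nsmul_eq_mul, mul_one]
  exact div_self this

/-! ### Factorial moments of the cycle counts -/

/-- Removing `j` parts equal to `m` divides `z_M` by `m ^ j` times a falling factorial, so that the
`j`-th factorial moment of `n_m` is `m ^ (-j)` times a mean over permutations of `n - j m`
points. -/
lemma typeAvg_descFactorial_le {m : ℕ} (hm : 0 < m) (j : ℕ) (g : Multiset ℕ → ℝ)
    (hg : ∀ M, g (M + Multiset.replicate j m) = g M) {B : ℝ} (hB0 : 0 ≤ B)
    (hB : ∀ n, typeAvg n g ≤ B) (n : ℕ) :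
    typeAvg n (fun M => ((M.count m).descFactorial j : ℝ) * g M) ≤ (1 / (m : ℝ)) ^ j * B := by
  have hm' : (0 : ℝ) < m := by exact_mod_cast hm
  unfold typeAvg
  have hres : ∑ M ∈ partsSet n, ((M.count m).descFactorial j : ℝ) * g M / zWeight M
      = ∑ M ∈ (partsSet n).filter (fun M => Multiset.replicate j m ≤ M),
        ((M.count m).descFactorial j : ℝ) * g M / zWeight M := by
    rw [Finset.sum_filter]
    refine Finset.sum_congr rfl fun M _ => ?_
    split_ifs with h
    · rfl
    · rw [← Multiset.le_count_iff_replicate_le, not_le] at h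
      rw [Nat.descFactorial_of_lt h]
      simp
  rw [hres]
  by_cases hjn : j * m ≤ n
  · have : ∑ M ∈ (partsSet n).filter (fun M => Multiset.replicate j m ≤ M),
        ((M.count m).descFactorial j : ℝ) * g M / zWeight M
        = ∑ M ∈ partsSet (n - j * m), (1 / (m : ℝ)) ^ j * (g M / zWeight M) := by
      refine Finset.sum_nbij' (fun M => M - Multiset.replicate j m)
        (fun M => M + Multiset.replicate j m) ?_ ?_ ?_ ?_ ?_
      · intro M hM
        obtain ⟨hM, hle⟩ := Finset.mem_filter.1 hM
        rw [mem_partsSet] at hM ⊢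
        refine ⟨?_, fun i hi => hM.2 i (Multiset.mem_of_le (Multiset.sub_le_self _ _) hi)⟩
        have := congrArg Multiset.sum (Multiset.sub_add_cancel hle)
        simp only [Multiset.sum_add, Multiset.sum_replicate, smul_eq_mul, hM.1] at this
        omega
      · intro M hM
        rw [mem_partsSet] at hM
        refine Finset.mem_filter.2 ⟨mem_partsSet.2 ⟨?_, ?_⟩, Multiset.le_add_left _ _⟩
        · simp only [Multiset.sum_add, Multiset.sum_replicate, smul_eq_mul, hM.1]
          omega
        · intro i hi
          rcases Multiset.mem_add.1 hi with hi | hi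
          · exact hM.2 i hi
          · rw [Multiset.eq_of_mem_replicate hi]; exact hm
      · intro M hM
        exact Multiset.sub_add_cancel (Finset.mem_filter.1 hM).2
      · intro M _
        exact Multiset.add_sub_cancel_right
      · intro M hM
        obtain ⟨hM, hle⟩ := Finset.mem_filter.1 hM
        obtain ⟨K, rfl⟩ := Multiset.le_iff_exists_add.1 hle
        rw [add_comm] at hM ⊢
        rw [Multiset.add_sub_cancel_right]
        have hK : ∀ i ∈ K, 0 < i := fun i hi =>
          (mem_partsSet.1 hM).2 i (Multiset.mem_add.2 (Or.inl hi))
        have hz : (0 : ℝ) < zWeight K := by exact_mod_cast zWeight_pos hK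
        have hd : (0 : ℝ) < ((K.count m + j).descFactorial j : ℝ) := by
          exact_mod_cast Nat.descFactorial_pos.2 (Nat.le_add_left _ _)
        rw [hg, zWeight_add_replicate, Multiset.count_add, Multiset.count_replicate_self]
        rw [one_div, inv_pow]
        push_cast
        field_simp
    rw [this, ← Finset.mul_sum]
    exact mul_le_mul_of_nonneg_left (hB _) (by positivity)
  · rw [Finset.sum_eq_zero]
    · positivity
    · intro M hM
      obtain ⟨hM, hle⟩ := Finset.mem_filter.1 hM
      obtain ⟨K, rfl⟩ := Multiset.le_iff_exists_add.1 hle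
      have := (mem_partsSet.1 hM).1
      simp only [Multiset.sum_add, Multiset.sum_replicate, smul_eq_mul] at this
      omega

/-- Expanding each factor in falling factorials, the mean of a product of functions of the
individual cycle counts is at most what independent Poisson counts of means `1 / m` would give. -/
lemma typeAvg_prod_le (N : ℕ) (v : ℕ → ℕ → ℝ) (hv : ∀ m j, 0 ≤ v m j) (S : Finset ℕ)
    (hS : ∀ m ∈ S, 0 < m) (n : ℕ) :
    typeAvg n (fun M => ∏ m ∈ S, ∑ j ∈ Finset.range N, v m j * ((M.count m).descFactorial j : ℝ))
      ≤ ∏ m ∈ S, ∑ j ∈ Finset.range N, v m j * (1 / (m : ℝ)) ^ j := by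
  induction S using Finset.induction_on generalizing n with
  | empty => simpa using (typeAvg_one n).le
  | insert m S hmS ih =>
    have hS' : ∀ m ∈ S, 0 < m := fun i hi => hS i (Finset.mem_insert_of_mem hi)
    simp only [Finset.prod_insert hmS]
    set g : Multiset ℕ → ℝ := fun M =>
      ∏ m ∈ S, ∑ j ∈ Finset.range N, v m j * ((M.count m).descFactorial j : ℝ) with hg
    set B := ∏ m ∈ S, ∑ j ∈ Finset.range N, v m j * (1 / (m : ℝ)) ^ j with hB
    have hB0 : 0 ≤ B := Finset.prod_nonneg fun m _ => Finset.sum_nonneg fun j _ =>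
      mul_nonneg (hv m j) (by positivity)
    have hginv : ∀ j M, g (M + Multiset.replicate j m) = g M := by
      intro j M
      refine Finset.prod_congr rfl fun i hi => ?_
      have : m ≠ i := fun h => hmS (h ▸ hi)
      simp [Multiset.count_replicate, this]
    have hsplit : typeAvg n (fun M =>
        (∑ j ∈ Finset.range N, v m j * ((M.count m).descFactorial j : ℝ)) * g M)
        = ∑ j ∈ Finset.range N,
          v m j * typeAvg n (fun M => ((M.count m).descFactorial j : ℝ) * g M) := by
      simp only [typeAvg, Finset.mul_sum, Finset.sum_mul, Finset.sum_div]
      rw [Finset.sum_comm]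
      refine Finset.sum_congr rfl fun j _ => Finset.sum_congr rfl fun M _ => ?_
      ring
    rw [hsplit, Finset.sum_mul]
    refine Finset.sum_le_sum fun j _ => ?_
    rw [mul_assoc]
    exact mul_le_mul_of_nonneg_left
      (typeAvg_descFactorial_le (hS m (Finset.mem_insert_self _ _)) j g (hginv j) hB0
        (ih hS') n) (hv m j)

/-! ### Dependence on `s` -/

lemma pow_growth {s : ℝ} (h0 : 0 ≤ s) (h1 : s ≤ 1 / 10) {i : ℕ} (hi : 0 < i) :
    s ^ i ≤ 10 * s * (1 / 10 : ℝ) ^ i := by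
  obtain ⟨j, rfl⟩ : ∃ j, i = j + 1 := ⟨i - 1, by omega⟩
  have : s ^ j ≤ (1 / 10 : ℝ) ^ j := pow_le_pow_left₀ h0 h1 j
  calc s ^ (j + 1) = s * s ^ j := by ring
    _ ≤ s * (1 / 10 : ℝ) ^ j := mul_le_mul_of_nonneg_left this h0
    _ = 10 * s * (1 / 10 : ℝ) ^ (j + 1) := by ring

/-- Bounds of the form `a - 1 ≤ r (A - 1)` with `r ≤ 1` are stable under products. -/
lemma growth_mul {r a b A B : ℝ} (hr1 : r ≤ 1)
    (ha : 1 ≤ a ∧ a - 1 ≤ r * (A - 1)) (hb : 1 ≤ b ∧ b - 1 ≤ r * (B - 1))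
    (hA : 1 ≤ A) :
    1 ≤ a * b ∧ a * b - 1 ≤ r * (A * B - 1) := by
  have haA : a ≤ A := by nlinarith [ha.2]
  refine ⟨by nlinarith [ha.1, hb.1], ?_⟩
  have h1 : a * (b - 1) ≤ A * (r * (B - 1)) := by
    apply mul_le_mul haA hb.2 <;> linarith [ha.1, hb.1]
  nlinarith [ha.2]

lemma growth_pow {r a A : ℝ} (hr1 : r ≤ 1)
    (ha : 1 ≤ a ∧ a - 1 ≤ r * (A - 1)) (hA : 1 ≤ A) (b : ℕ) :
    1 ≤ a ^ b ∧ a ^ b - 1 ≤ r * (A ^ b - 1) := by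
  induction b with
  | zero => simp
  | succ b ih =>
    rw [pow_succ, pow_succ]
    exact growth_mul hr1 ih ha (one_le_pow₀ hA)

lemma growth_prod {r : ℝ} (hr1 : r ≤ 1) (S : Finset ℕ) (a A : ℕ → ℝ)
    (ha : ∀ m ∈ S, 1 ≤ a m ∧ a m - 1 ≤ r * (A m - 1)) (hA : ∀ m ∈ S, 1 ≤ A m) :
    1 ≤ ∏ m ∈ S, a m ∧ ∏ m ∈ S, a m - 1 ≤ r * (∏ m ∈ S, A m - 1) := by
  induction S using Finset.induction_on with
  | empty => simp
  | insert m S hm ih =>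
    rw [Finset.prod_insert hm, Finset.prod_insert hm]
    refine growth_mul hr1 (ha m (by simp))
      (ih (fun i hi => ha i (by simp [hi])) fun i hi => hA i (by simp [hi])) (hA m (by simp))

/-- As a polynomial in `s`, `F` has nonnegative coefficients and constant term `1`, so that
`(F - 1) / s` is nondecreasing in `s`. -/
lemma Fprod_growth {n : ℕ} (k : ℕ) {s : ℝ} (h0 : 0 ≤ s) (h1 : s ≤ 1 / 10)
    (σ : Equiv.Perm (Fin n)) :
    1 ≤ Fprod k s σ ∧ Fprod k s σ - 1 ≤ 10 * s * (Fprod k (1 / 10) σ - 1) := by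
  have hr1 : 10 * s ≤ 1 := by linarith
  have hone : ∀ t : ℝ, 0 ≤ t → ∀ m : ℕ,
      1 ≤ 1 + t ^ m * (cycleCount σ m : ℝ) * (if Even m then 1 else 0)
      + 2 * t ^ (2 * m) * (∑ ℓ ∈ Finset.Icc 1 m, (ℓ : ℝ) * (cycleCount σ ℓ : ℝ))
      + t ^ (4 * m) * (m : ℝ) * (cycleCount σ (2 * m) : ℝ) * (if 2 * m ≤ k then 1 else 0) := by
    intro t ht m
    have a1 : 0 ≤ t ^ m * (cycleCount σ m : ℝ) * (if Even m then 1 else 0) := by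
      split_ifs <;> positivity
    have a2 : 0 ≤ 2 * t ^ (2 * m) * (∑ ℓ ∈ Finset.Icc 1 m, (ℓ : ℝ) * (cycleCount σ ℓ : ℝ)) := by
      positivity
    have a3 : 0 ≤ t ^ (4 * m) * (m : ℝ) * (cycleCount σ (2 * m) : ℝ)
        * (if 2 * m ≤ k then 1 else 0) := by
      split_ifs <;> positivity
    linarith
  unfold Fprod
  refine growth_prod hr1 _ _ _ (fun m hm => growth_pow hr1 ⟨hone s h0 m, ?_⟩
    (hone _ (by norm_num) m) _) fun m _ => one_le_pow₀ (hone _ (by norm_num) m)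
  have hm1 : 0 < m := (Finset.mem_Icc.1 hm).1
  have b1 : s ^ m * ((cycleCount σ m : ℝ) * (if Even m then 1 else 0))
      ≤ 10 * s * (1 / 10 : ℝ) ^ m * ((cycleCount σ m : ℝ) * (if Even m then 1 else 0)) :=
    mul_le_mul_of_nonneg_right (pow_growth h0 h1 hm1) (by split_ifs <;> positivity)
  have b2 : s ^ (2 * m) * (2 * ∑ ℓ ∈ Finset.Icc 1 m, (ℓ : ℝ) * (cycleCount σ ℓ : ℝ))
      ≤ 10 * s * (1 / 10 : ℝ) ^ (2 * m)
        * (2 * ∑ ℓ ∈ Finset.Icc 1 m, (ℓ : ℝ) * (cycleCount σ ℓ : ℝ)) :=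
    mul_le_mul_of_nonneg_right (pow_growth h0 h1 (by omega)) (by positivity)
  have b3 : s ^ (4 * m) * ((m : ℝ) * (cycleCount σ (2 * m) : ℝ) * (if 2 * m ≤ k then 1 else 0))
      ≤ 10 * s * (1 / 10 : ℝ) ^ (4 * m)
        * ((m : ℝ) * (cycleCount σ (2 * m) : ℝ) * (if 2 * m ≤ k then 1 else 0)) :=
    mul_le_mul_of_nonneg_right (pow_growth h0 h1 (by omega)) (by split_ifs <;> positivity)
  linarith

/-! ### Decoupling the cycle counts -/

/-- The quantity added to `1` in the `m`-th factor of `F` at `s = 1/10`, for cycle counts `a`. -/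
def excess (k : ℕ) (a : ℕ → ℕ) (m : ℕ) : ℝ :=
  (1 / 10 : ℝ) ^ m * (a m : ℝ) * (if Even m then 1 else 0)
    + 2 * (1 / 10 : ℝ) ^ (2 * m) * (∑ ℓ ∈ Finset.Icc 1 m, (ℓ : ℝ) * (a ℓ : ℝ))
    + (1 / 10 : ℝ) ^ (4 * m) * (m : ℝ) * (a (2 * m) : ℝ) * (if 2 * m ≤ k then 1 else 0)

lemma excess_nonneg (k : ℕ) (a : ℕ → ℕ) (m : ℕ) : 0 ≤ excess k a m := by
  unfold excess
  split_ifs <;> positivity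

lemma mul_tenth_pow_le (l : ℕ) : (l : ℝ) * (1 / 10 : ℝ) ^ l ≤ 1 / 10 := by
  cases l with
  | zero => norm_num
  | succ l =>
    have h : ((l + 1 : ℕ) : ℝ) ≤ 10 ^ l := by
      exact_mod_cast Nat.succ_le_of_lt (Nat.lt_pow_self (by norm_num))
    have h0 : (0 : ℝ) < (1 / 10 : ℝ) ^ l := by positivity
    have h1 : (10 : ℝ) ^ l * (1 / 10 : ℝ) ^ l = 1 := by rw [← mul_pow]; norm_num
    have h2 := mul_le_mul_of_nonneg_right h h0.le
    rw [pow_succ]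
    linarith

/-- Each count `a ℓ` enters the sum of all excesses linearly with a coefficient `O(1 / ℓ)`. -/
lemma sum_excess_le (k : ℕ) (a : ℕ → ℕ) :
    2 * ∑ m ∈ Finset.Icc 1 k, excess k a m ≤ ∑ l ∈ Finset.Icc 1 k, (7 / 25 / (l : ℝ)) * a l := by
  have h1 : ∑ m ∈ Finset.Icc 1 k, (1 / 10 : ℝ) ^ m * (a m : ℝ) * (if Even m then 1 else 0)
      ≤ ∑ l ∈ Finset.Icc 1 k, (1 / 10 : ℝ) ^ l * a l := by
    refine Finset.sum_le_sum fun m _ => ?_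
    have : 0 ≤ (1 / 10 : ℝ) ^ m * a m := by positivity
    split_ifs <;> linarith
  have h2 : ∑ m ∈ Finset.Icc 1 k,
      2 * (1 / 10 : ℝ) ^ (2 * m) * (∑ l ∈ Finset.Icc 1 m, (l : ℝ) * (a l : ℝ))
      ≤ ∑ l ∈ Finset.Icc 1 k, (200 / 99) * (1 / 10 : ℝ) ^ (2 * l) * l * a l := by
    simp only [Finset.mul_sum]
    rw [Finset.sum_comm' (t' := Finset.Icc 1 k) (s' := fun l => Finset.Ico l (k + 1))
      (by intro x y; simp only [Finset.mem_Icc, Finset.mem_Ico]; omega)]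
    refine Finset.sum_le_sum fun l _ => ?_
    rw [← Finset.sum_mul, ← Finset.mul_sum]
    have hgeo : ∑ m ∈ Finset.Ico l (k + 1), (1 / 10 : ℝ) ^ (2 * m)
        ≤ (100 / 99) * (1 / 10 : ℝ) ^ (2 * l) := by
      simp only [pow_mul]
      refine (geom_sum_Ico_le_of_lt_one (by norm_num) (by norm_num)).trans (le_of_eq ?_)
      norm_num
      ring
    calc _ ≤ 2 * ((100 / 99) * (1 / 10 : ℝ) ^ (2 * l)) * ((l : ℝ) * a l) := by gcongr
      _ = _ := by ring
  have h3 : ∑ m ∈ Finset.Icc 1 k,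
      (1 / 10 : ℝ) ^ (4 * m) * (m : ℝ) * (a (2 * m) : ℝ) * (if 2 * m ≤ k then 1 else 0)
      ≤ ∑ l ∈ Finset.Icc 1 k, (1 / 10 : ℝ) ^ (2 * l) * l * a l := by
    have e : ∑ m ∈ Finset.Icc 1 k,
        (1 / 10 : ℝ) ^ (4 * m) * (m : ℝ) * (a (2 * m) : ℝ) * (if 2 * m ≤ k then 1 else 0)
        ≤ ∑ m ∈ (Finset.Icc 1 k).filter (fun m => 2 * m ≤ k),
          (1 / 10 : ℝ) ^ (2 * (2 * m)) * ((2 * m : ℕ) : ℝ) * (a (2 * m) : ℝ) := by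
      rw [Finset.sum_filter]
      refine Finset.sum_le_sum fun m _ => ?_
      split_ifs
      · rw [show 2 * (2 * m) = 4 * m by ring, mul_one]
        gcongr
        omega
      · simp
    refine e.trans ?_
    rw [← Finset.sum_image (s := (Finset.Icc 1 k).filter (fun m => 2 * m ≤ k))
      (g := fun m => 2 * m) (f := fun l : ℕ => (1 / 10 : ℝ) ^ (2 * l) * (l : ℝ) * (a l : ℝ))
      (fun x _ y _ h => by simpa using h)]
    refine Finset.sum_le_sum_of_subset_of_nonneg ?_ fun l _ _ => by positivity
    intro l hl
    simp only [Finset.mem_image, Finset.mem_filter, Finset.mem_Icc] at hl ⊢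
    omega
  simp only [excess, Finset.sum_add_distrib]
  refine (mul_le_mul_of_nonneg_left (add_le_add (add_le_add h1 h2) h3) zero_le_two).trans ?_
  rw [← Finset.sum_add_distrib, ← Finset.sum_add_distrib, Finset.mul_sum]
  refine Finset.sum_le_sum fun l hl => ?_
  have hl0 : (0 : ℝ) < l := by exact_mod_cast (Finset.mem_Icc.1 hl).1
  have ht := mul_tenth_pow_le l
  have ht0 : 0 < (1 / 10 : ℝ) ^ l := by positivity
  have hcoef : 2 * ((1 / 10 : ℝ) ^ l + (200 / 99) * (1 / 10 : ℝ) ^ (2 * l) * l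
      + (1 / 10 : ℝ) ^ (2 * l) * l) ≤ 7 / 25 / (l : ℝ) := by
    rw [le_div_iff₀ hl0, mul_comm 2 l, pow_mul]
    set t := (1 / 10 : ℝ) ^ l
    have : (l * t) * (l * t) ≤ 1 / 10 * (1 / 10) := by gcongr
    nlinarith
  calc _ = 2 * ((1 / 10 : ℝ) ^ l + (200 / 99) * (1 / 10 : ℝ) ^ (2 * l) * l
      + (1 / 10 : ℝ) ^ (2 * l) * l) * a l := by ring
    _ ≤ _ := by gcongr

/-- The price of replacing `(1 + x) ^ b` by `exp (2 x)`: a factor of factorial growth, which is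
`1` for the typical values `b = 0, 1`. -/
def penalty (b : ℕ) : ℝ := if b ≤ 1 then 1 else Real.exp 2 * b.factorial / 2 ^ b

lemma penalty_nonneg (b : ℕ) : 0 ≤ penalty b := by
  unfold penalty
  split_ifs <;> positivity

/-- For `b ≥ 2` this is the single term `(2 (1 + x)) ^ b / b! ≤ exp (2 (1 + x))` of the exponential
series. -/
lemma one_add_pow_le {x : ℝ} (hx : 0 ≤ x) (b : ℕ) :
    (1 + x) ^ b ≤ penalty b * Real.exp (2 * x) := by
  unfold penalty
  split_ifs with h
  · have h1 := Real.add_one_le_exp (2 * x)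
    interval_cases b <;> norm_num <;> linarith
  · have h1 := Real.pow_div_factorial_le_exp (x := 2 * (1 + x)) (by linarith) b
    have hb : (0 : ℝ) < b.factorial := by exact_mod_cast b.factorial_pos
    rw [div_le_iff₀ hb, mul_pow, mul_add, Real.exp_add, mul_one] at h1
    have h2 : (0 : ℝ) < 2 ^ b := by positivity
    rw [div_mul_eq_mul_div, le_div_iff₀ h2]
    linarith

lemma exp_coef_le {l : ℕ} (hl : 0 < l) :
    Real.exp (7 / 25 / (l : ℝ)) ≤ 1 + 2 / 5 / (l : ℝ) := by
  have hl1 : (1 : ℝ) ≤ l := by exact_mod_cast hl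
  have hu1 : 1 / (l : ℝ) ≤ 1 := by rw [div_le_one (by linarith)]; exact hl1
  have hu0 : 0 < 1 / (l : ℝ) := by positivity
  have e1 : 7 / 25 / (l : ℝ) = 7 / 25 * (1 / l) := by ring
  have e2 : 2 / 5 / (l : ℝ) = 2 / 5 * (1 / l) := by ring
  rw [e1, e2]
  set u := 1 / (l : ℝ)
  have := Real.abs_exp_sub_one_sub_id_le (x := 7 / 25 * u) (by rw [abs_le]; constructor <;> linarith)
  have := (abs_le.1 this).2
  nlinarith

/-- Falling-factorial coefficients of an upper bound for `b ↦ penalty b * (1 + 2 / (5 m)) ^ b`. -/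
def coef (m j : ℕ) : ℝ :=
  if j = 0 then 1 else if j = 1 then 2 / 5 / (m : ℝ) else Real.exp 2 * (7 / 10 : ℝ) ^ j

lemma coef_nonneg (m j : ℕ) : 0 ≤ coef m j := by
  unfold coef
  split_ifs <;> positivity

lemma penalty_mul_le {m : ℕ} (hm : 0 < m) {b N : ℕ} (hb : b < N) :
    penalty b * (1 + 2 / 5 / (m : ℝ)) ^ b
      ≤ ∑ j ∈ Finset.range N, coef m j * (b.descFactorial j : ℝ) := by
  have hm1 : (1 : ℝ) ≤ m := by exact_mod_cast hm
  have hnn : ∀ j ∈ Finset.range N, 0 ≤ coef m j * (b.descFactorial j : ℝ) := fun j _ =>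
    mul_nonneg (coef_nonneg m j) (by positivity)
  rcases Nat.lt_or_ge b 2 with h | h
  · have hsub : Finset.range (b + 1) ⊆ Finset.range N := Finset.range_subset_range.2 hb
    refine le_trans (le_of_eq ?_) (Finset.sum_le_sum_of_subset_of_nonneg hsub fun j hj _ => hnn j hj)
    interval_cases b <;> simp [penalty, coef, Finset.sum_range_succ]
  -- for `b ≥ 2` only the top term `j = b` of the expansion is kept
  · refine le_trans ?_ (Finset.single_le_sum hnn (Finset.mem_range.2 hb))
    have hq : 1 + 2 / 5 / (m : ℝ) ≤ 7 / 5 := by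
      have : 2 / 5 / (m : ℝ) ≤ 2 / 5 := div_le_self (by norm_num) hm1
      linarith
    have hq' : (1 + 2 / 5 / (m : ℝ)) ^ b ≤ (7 / 5 : ℝ) ^ b :=
      pow_le_pow_left₀ (by positivity) hq b
    rw [Nat.descFactorial_self, penalty, coef, if_neg (by omega), if_neg (by omega),
      if_neg (by omega)]
    calc Real.exp 2 * b.factorial / 2 ^ b * (1 + 2 / 5 / (m : ℝ)) ^ b
        ≤ Real.exp 2 * b.factorial / 2 ^ b * (7 / 5 : ℝ) ^ b := by gcongr
      _ = Real.exp 2 * ((7 / 5 : ℝ) / 2) ^ b * b.factorial := by rw [div_pow (7 / 5 : ℝ)]; ring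
      _ = _ := by norm_num

lemma sum_coef_le {m : ℕ} (hm : 0 < m) (N : ℕ) :
    ∑ j ∈ Finset.range N, coef m j * (1 / (m : ℝ)) ^ j
      ≤ Real.exp ((1 + 4 * Real.exp 2) * (1 / (m : ℝ) ^ 2)) := by
  have hm1 : (1 : ℝ) ≤ m := by exact_mod_cast hm
  have hu1 : 1 / (m : ℝ) ≤ 1 := by rw [div_le_one (by linarith)]; exact hm1
  have hu0 : 0 < 1 / (m : ℝ) := by positivity
  have e3 : 1 / (m : ℝ) ^ 2 = (1 / (m : ℝ)) ^ 2 := by rw [div_pow, one_pow]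
  have e2 : 2 / 5 / (m : ℝ) = 2 / 5 * (1 / m) := by ring
  have term : ∀ j, coef m j * (1 / (m : ℝ)) ^ j ≤ (if j = 0 then 1 else 0)
      + (if j = 1 then 2 / 5 * (1 / (m : ℝ)) ^ 2 else 0)
      + Real.exp 2 * (1 / (m : ℝ)) ^ 2 * (7 / 10 : ℝ) ^ j := by
    intro j
    have pos : 0 ≤ Real.exp 2 * (1 / (m : ℝ)) ^ 2 * (7 / 10 : ℝ) ^ j := by positivity
    unfold coef
    split_ifs with h h' h'
    · omega
    · subst h; linarith [pow_zero (1 / (m : ℝ))]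
    · subst h'; rw [e2]; nlinarith
    · have : (1 / (m : ℝ)) ^ j ≤ (1 / (m : ℝ)) ^ 2 :=
        pow_le_pow_of_le_one hu0.le hu1 (by omega)
      calc _ ≤ Real.exp 2 * (7 / 10 : ℝ) ^ j * (1 / (m : ℝ)) ^ 2 := by gcongr
        _ = _ := by ring
  have geo : ∑ j ∈ Finset.range N, (7 / 10 : ℝ) ^ j ≤ 10 / 3 := by
    have := geom_sum_Ico_le_of_lt_one (x := (7 / 10 : ℝ)) (m := 0) (n := N) (by norm_num)
      (by norm_num)
    rw [← Finset.range_eq_Ico] at this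
    norm_num at this ⊢
    exact this
  have hsum := Finset.sum_le_sum fun j (_ : j ∈ Finset.range N) => term j
  simp only [Finset.sum_add_distrib, ← Finset.mul_sum, Finset.sum_ite_eq'] at hsum
  have i1 : (if 0 ∈ Finset.range N then (1 : ℝ) else 0) ≤ 1 := by split_ifs <;> norm_num
  have i2 : (if 1 ∈ Finset.range N then 2 / 5 * (1 / (m : ℝ)) ^ 2 else 0)
      ≤ 2 / 5 * (1 / (m : ℝ)) ^ 2 := by split_ifs <;> first | exact le_rfl | positivity
  have i3 : Real.exp 2 * (1 / (m : ℝ)) ^ 2 * ∑ j ∈ Finset.range N, (7 / 10 : ℝ) ^ j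
      ≤ Real.exp 2 * (1 / (m : ℝ)) ^ 2 * (10 / 3) := by gcongr
  have pos : 0 ≤ Real.exp 2 * (1 / (m : ℝ)) ^ 2 := by positivity
  rw [e3]
  refine le_trans ?_ (Real.add_one_le_exp _)
  nlinarith [sq_nonneg (1 / (m : ℝ))]

/-! ### The uniform bound -/

lemma count_le_of_mem {n : ℕ} {M : Multiset ℕ} (hM : M ∈ partsSet n) (m : ℕ) : M.count m ≤ n := by
  rw [mem_partsSet] at hM
  have h := Multiset.card_nsmul_le_sum (s := M) (a := 1) fun i hi => hM.2 i hi
  have := Multiset.count_le_card m M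
  simp only [smul_eq_mul, mul_one] at h
  omega

lemma Fprod_le {n : ℕ} (k : ℕ) (σ : Equiv.Perm (Fin n)) :
    Fprod k (1 / 10) σ ≤ ∏ m ∈ Finset.Icc 1 k, ∑ j ∈ Finset.range (n + 1),
      coef m j * (((fullType σ).count m).descFactorial j : ℝ) := by
  set a : ℕ → ℕ := cycleCount σ with ha
  have e : Fprod k (1 / 10) σ = ∏ m ∈ Finset.Icc 1 k, (1 + excess k a m) ^ a m := by
    unfold Fprod excess
    refine Finset.prod_congr rfl fun m _ => ?_
    rw [← add_assoc, ← add_assoc]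
  rw [e]
  calc ∏ m ∈ Finset.Icc 1 k, (1 + excess k a m) ^ a m
      ≤ ∏ m ∈ Finset.Icc 1 k, penalty (a m) * Real.exp (2 * excess k a m) :=
        Finset.prod_le_prod (fun m _ => pow_nonneg (by linarith [excess_nonneg k a m]) _)
          fun m _ => one_add_pow_le (excess_nonneg k a m) _
    _ = (∏ m ∈ Finset.Icc 1 k, penalty (a m))
          * Real.exp (2 * ∑ m ∈ Finset.Icc 1 k, excess k a m) := by
        rw [Finset.prod_mul_distrib, ← Real.exp_sum, Finset.mul_sum]
    _ ≤ (∏ m ∈ Finset.Icc 1 k, penalty (a m))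
          * Real.exp (∑ l ∈ Finset.Icc 1 k, (7 / 25 / (l : ℝ)) * a l) :=
        mul_le_mul_of_nonneg_left (Real.exp_le_exp.2 (sum_excess_le k a))
          (Finset.prod_nonneg fun m _ => penalty_nonneg _)
    _ = ∏ m ∈ Finset.Icc 1 k, penalty (a m) * Real.exp (7 / 25 / (m : ℝ)) ^ a m := by
        rw [Real.exp_sum, ← Finset.prod_mul_distrib]
        refine Finset.prod_congr rfl fun m _ => ?_
        rw [← Real.exp_nat_mul, mul_comm (a m : ℝ)]
    _ ≤ _ := by
        refine Finset.prod_le_prod (fun m _ => mul_nonneg (penalty_nonneg _) (by positivity))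
          fun m hm => ?_
        have hm0 : 0 < m := (Finset.mem_Icc.1 hm).1
        rw [← cycleCount_eq]
        refine le_trans (mul_le_mul_of_nonneg_left
          (pow_le_pow_left₀ (Real.exp_pos _).le (exp_coef_le hm0) _) (penalty_nonneg _))
          (penalty_mul_le hm0 ?_)
        rw [ha, cycleCount_eq]
        exact Nat.lt_succ_of_le (count_le_of_mem (fullType_mem σ) m)

lemma permAvg_mono {n : ℕ} {f g : Equiv.Perm (Fin n) → ℝ} (h : ∀ σ, f σ ≤ g σ) :
    permAvg n f ≤ permAvg n g := by
  unfold permAvg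
  exact div_le_div_of_nonneg_right (Finset.sum_le_sum fun σ _ => h σ) (by positivity)

lemma permAvg_affine {n : ℕ} (f : Equiv.Perm (Fin n) → ℝ) (r : ℝ) :
    permAvg n (fun σ => 1 + r * (f σ - 1)) = 1 + r * (permAvg n f - 1) := by
  have : (Fintype.card (Equiv.Perm (Fin n)) : ℝ) ≠ 0 := by exact_mod_cast Fintype.card_ne_zero
  simp only [permAvg, Finset.sum_add_distrib, ← Finset.mul_sum, Finset.sum_sub_distrib,
    Finset.sum_const, Finset.card_univ, nsmul_eq_mul, mul_one]
  field_simp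

/-- At the largest admissible value `s = 1/10` the mean is bounded uniformly in both `n` and `k`. -/
lemma exists_bound : ∃ C : ℝ, ∀ n k : ℕ, permAvg n (Fprod k (1 / 10)) ≤ C := by
  have hsum : Summable fun m : ℕ => (1 + 4 * Real.exp 2) * (1 / (m : ℝ) ^ 2) :=
    (Real.summable_one_div_nat_pow.2 one_lt_two).mul_left _
  refine ⟨Real.exp (∑' m : ℕ, (1 + 4 * Real.exp 2) * (1 / (m : ℝ) ^ 2)), fun n k => ?_⟩
  have hpos : ∀ m ∈ Finset.Icc 1 k, 0 < m := fun m hm => (Finset.mem_Icc.1 hm).1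
  refine (permAvg_mono (Fprod_le k)).trans ?_
  rw [permAvg_fullType n fun M => ∏ m ∈ Finset.Icc 1 k, ∑ j ∈ Finset.range (n + 1),
      coef m j * ((M.count m).descFactorial j : ℝ)]
  refine (typeAvg_prod_le (n + 1) coef coef_nonneg _ hpos n).trans ?_
  refine (Finset.prod_le_prod (fun m _ => Finset.sum_nonneg fun j _ =>
    mul_nonneg (coef_nonneg m j) (by positivity)) fun m hm => sum_coef_le (hpos m hm) _).trans ?_
  rw [← Real.exp_sum]
  exact Real.exp_le_exp.2 (hsum.sum_le_tsum _ fun m _ => by positivity)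

/-- Proposition 5 of the paper: with `σ` uniform on `S_n`, `k_n (log k_n)⁴ = o(n)`
and `s_n ∈ [0,1]`: if `s_n ≤ 0.1` for all `n` then `sup_n E[F_n] < ∞`; if moreover `s_n → 0` then
`E[F_n] → 1`. -/
theorem stmt14 (k : ℕ → ℕ) (hk : ∀ n, 0 < k n)
    (hko : Tendsto (fun n : ℕ => (k n : ℝ) * (Real.log (k n)) ^ 4 / (n : ℝ)) atTop (nhds 0))
    (s : ℕ → ℝ) (hs : ∀ n, s n ∈ Set.Icc (0 : ℝ) 1) :
    ((∀ n, s n ≤ 0.1) → ∃ C : ℝ, ∀ n, permAvg n (Fprod (k n) (s n)) ≤ C) ∧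
    ((∀ n, s n ≤ 0.1) → Tendsto s atTop (nhds 0) →
      Tendsto (fun n => permAvg n (Fprod (k n) (s n))) atTop (nhds 1)) := by
  obtain ⟨C, hC⟩ := exists_bound
  have hlow : (∀ n, s n ≤ 0.1) → ∀ n, 1 ≤ permAvg n (Fprod (k n) (s n)) := by
    intro h n
    have := permAvg_mono (n := n) (f := fun σ => 1 + 0 * (Fprod (k n) (s n) σ - 1))
      (g := Fprod (k n) (s n)) fun σ => by
        have := (Fprod_growth (k n) (hs n).1 ((h n).trans (by norm_num)) σ).1
        linarith
    rw [permAvg_affine] at this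
    linarith
  have hup : (∀ n, s n ≤ 0.1) →
      ∀ n, permAvg n (Fprod (k n) (s n)) ≤ 1 + 10 * s n * (C - 1) := by
    intro h n
    have := permAvg_mono (n := n) (f := Fprod (k n) (s n))
      (g := fun σ => 1 + 10 * s n * (Fprod (k n) (1 / 10) σ - 1)) fun σ => by
        have := (Fprod_growth (k n) (hs n).1 ((h n).trans (by norm_num)) σ).2
        linarith
    rw [permAvg_affine] at this
    have h2 : 10 * s n * (permAvg n (Fprod (k n) (1 / 10)) - 1) ≤ 10 * s n * (C - 1) :=
      mul_le_mul_of_nonneg_left (by linarith [hC n (k n)]) (by linarith [(hs n).1])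
    linarith
  refine ⟨fun h => ⟨1 + 10 * |C - 1|, fun n => (hup h n).trans ?_⟩, fun h h0 => ?_⟩
  · have h1 := le_abs_self (C - 1)
    have h2 := abs_nonneg (C - 1)
    have h3 := (hs n).1
    have h4 := (hs n).2
    nlinarith
  · refine tendsto_of_tendsto_of_tendsto_of_le_of_le tendsto_const_nhds ?_ (hlow h) (hup h)
    have := ((h0.const_mul 10).mul_const (C - 1)).const_add 1
    simpa using this

end
end

section
/- For all integers n ≥ 1 and a ≥ 0, the number of rooted pseudoforests on vertex set [n] with exactly a edges, allowing self-loops and multiple edges, is at most C(n,a)·(2n)^a. Here a multigraph on [n] is a finite multiset of unordered pairs of (not necessarily distinct) elements of [n]; it is a pseudoforest if every connected component contains at most one cycle, where a loop counts as a cycle and a pair of parallel edges counts as a cycle (equivalently, every connected component has at most as many edges, counted with multiplicity, as vertices); and 'rooted' means that each connected component carries a distinguished root vertex belonging to it. The count is over pairs (G, r) of such a multigraph G with a edges together with a choice r of roots. -/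
/-!
Assign each edge of a pseudoforest to one of its endpoints, injectively; the multigraph then
becomes a partial function on the vertices whose domain has `a` elements. One bit for each vertex
of the domain records whether it is the root of its component. If the vertices outside the domain
are all roots (as for trees oriented towards their root), both the multigraph and its roots can be
read off from these data, of which there are `C(n, a) * (2n) ^ a`.

The assignment (`exists_orientation`) is a matching obtained from Hall's theorem, an edge being
allowed any endpoint that is not the root of a component with fewer edges than vertices. Hall's
condition, and the fact that all vertices left out are roots, follow from `card_outside_le`: in a
component meeting `W` there are at least as many edges not contained in `W` as vertices not in `W`.
-/

open scoped Classical

noncomputable section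

/-- The underlying simple graph of a multigraph on `Fin n` (a multiset of unordered pairs of
not-necessarily-distinct vertices): two vertices are adjacent iff they are distinct and joined by
some edge of the multigraph. -/
def underlying {n : ℕ} (G : Multiset (Sym2 (Fin n))) : SimpleGraph (Fin n) :=
  SimpleGraph.fromEdgeSet {e | e ∈ G}

/-- A multigraph is a pseudoforest if every connected component (of its underlying simple graph)
has at most as many edges, counted with multiplicity, as vertices; equivalently, every component
contains at most one cycle, where a loop counts as a cycle and a pair of parallel edges counts as
a cycle. -/
def IsPseudoforestMulti {n : ℕ} (G : Multiset (Sym2 (Fin n))) : Prop :=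
  ∀ c : (underlying G).ConnectedComponent,
    Multiset.card (G.filter fun e => ∀ v ∈ e, (underlying G).connectedComponentMk v = c) ≤
      (Finset.univ.filter fun v => (underlying G).connectedComponentMk v = c).card

/-! ### Edges leaving a vertex set -/

/-- Distance-to-`W` argument: sending each vertex `v ∉ W` of a component meeting `W` to the first
edge of a shortest walk from `v` to `W` is injective, so there are at least as many edges not
contained in `W` as vertices outside `W`. -/
lemma card_outside_le {n a : ℕ} (H : SimpleGraph (Fin n)) (g : Fin a → Sym2 (Fin n))
    (hH : ∀ u v, H.Adj u v → ∃ i, g i = s(u, v))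
    (c : H.ConnectedComponent) (W : Finset (Fin n)) (w : Fin n) (hw : w ∈ W)
    (hwc : H.connectedComponentMk w = c) :
    (Finset.univ.filter fun v => H.connectedComponentMk v = c ∧ v ∉ W).card ≤
      (Finset.univ.filter fun i : Fin a =>
        (∃ v ∈ g i, H.connectedComponentMk v = c) ∧ ∃ v ∈ g i, v ∉ W).card := by
  let d : Fin n → ℕ := fun v => sInf {k | ∃ x ∈ W, ∃ p : H.Walk v x, p.length = k}
  have key : ∀ v, H.connectedComponentMk v = c ∧ v ∉ W →
      ∃ i u, g i = s(v, u) ∧ d u < d v := by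
    rintro v ⟨hv, hvW⟩
    have hne : {k | ∃ x ∈ W, ∃ p : H.Walk v x, p.length = k}.Nonempty := by
      obtain ⟨p⟩ := SimpleGraph.ConnectedComponent.exact (hv.trans hwc.symm)
      exact ⟨_, w, hw, p, rfl⟩
    obtain ⟨x, hx, p, hp⟩ := Nat.sInf_mem hne
    cases p with
    | nil => exact absurd hx hvW
    | @cons _ u _ h q =>
      obtain ⟨i, hi⟩ := hH _ _ h
      refine ⟨i, u, hi, ?_⟩
      have h1 : d u ≤ q.length := Nat.sInf_le ⟨x, hx, q, rfl⟩
      have h2 : (SimpleGraph.Walk.cons h q).length = d v := hp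
      rw [SimpleGraph.Walk.length_cons] at h2
      omega
  rcases Finset.eq_empty_or_nonempty
    (Finset.univ.filter fun v => H.connectedComponentMk v = c ∧ v ∉ W) with h0 | ⟨v₀, hv₀⟩
  · rw [h0]; simp
  have : Nonempty (Fin a) := ⟨(key v₀ (by simpa using hv₀)).choose⟩
  choose! e u he hd using key
  refine Finset.card_le_card_of_injOn e ?_ ?_
  · intro v hv
    have hv' : H.connectedComponentMk v = c ∧ v ∉ W := by simpa using hv
    have hm : v ∈ g (e v) := by rw [he v hv']; exact Sym2.mem_mk_left _ _
    simp only [Finset.coe_filter, Finset.mem_univ, true_and, Set.mem_ofPred_eq]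
    exact ⟨⟨v, hm, hv'.1⟩, v, hm, hv'.2⟩
  · intro v hv v' hv' hvv
    have h1 : H.connectedComponentMk v = c ∧ v ∉ W := by simpa using hv
    have h2 : H.connectedComponentMk v' = c ∧ v' ∉ W := by simpa using hv'
    have h3 : s(v, u v) = s(v', u v') := by rw [← he v h1, ← he v' h2, hvv]
    rcases Sym2.eq_iff.1 h3 with h | ⟨h, h'⟩
    · exact h.1
    · have h4 := hd v h1
      have h5 := hd v' h2
      rw [h'] at h4
      rw [← h] at h5
      omega

/-! ### Orienting the edges -/

/-- Each edge of a rooted pseudoforest can be assigned to one of its endpoints, injectively, so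
that every vertex receiving no edge is the root of its component. The assignment comes from Hall's
theorem, where an edge may use any endpoint except the roots of components with fewer edges than
vertices. -/
lemma exists_orientation {n a : ℕ} (H : SimpleGraph (Fin n)) (g : Fin a → Sym2 (Fin n))
    (hH : ∀ u v, H.Adj u v → ∃ i, g i = s(u, v))
    (hg : ∀ i, ∀ u ∈ g i, ∀ v ∈ g i, H.connectedComponentMk u = H.connectedComponentMk v)
    (hpf : ∀ c : H.ConnectedComponent,
      (Finset.univ.filter fun i => ∀ v ∈ g i, H.connectedComponentMk v = c).card ≤
        (Finset.univ.filter fun v => H.connectedComponentMk v = c).card)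
    (r : H.ConnectedComponent → Fin n) (hr : ∀ c, H.connectedComponentMk (r c) = c) :
    ∃ m : Fin a → Fin n, Function.Injective m ∧ (∀ i, m i ∈ g i) ∧
      ∀ v, (∀ i, m i ≠ v) → v = r (H.connectedComponentMk v) := by
  let K : Fin a → H.ConnectedComponent := fun i => H.connectedComponentMk (g i).out.1
  have hK : ∀ i, ∀ v ∈ g i, H.connectedComponentMk v = K i := fun i v hv =>
    hg i v hv _ (Sym2.out_fst_mem _)
  let V : H.ConnectedComponent → Finset (Fin n) := fun c =>
    Finset.univ.filter fun v => H.connectedComponentMk v = c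
  let E : H.ConnectedComponent → Finset (Fin a) := fun c => Finset.univ.filter fun i => K i = c
  have hEV : ∀ c, (E c).card ≤ (V c).card := by
    intro c
    refine le_trans (Finset.card_le_card ?_) (hpf c)
    intro i hi
    have hi' : K i = c := by simpa [E] using hi
    simp only [Finset.mem_filter, Finset.mem_univ, true_and]
    exact fun v hv => (hK i v hv).trans hi'
  have hout : ∀ (c : H.ConnectedComponent) (W : Finset (Fin n)) (w : Fin n), w ∈ W →
      H.connectedComponentMk w = c →
      ((V c) \ W).card ≤ ((E c).filter fun i => ∃ v ∈ g i, v ∉ W).card := by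
    intro c W w hw hwc
    refine le_trans (le_of_eq ?_) (le_trans (card_outside_le H g hH c W w hw hwc)
      (Finset.card_le_card ?_))
    · congr 1
      ext v
      simp [V]
    · intro i hi
      simp only [Finset.mem_filter, Finset.mem_univ, true_and, E] at hi ⊢
      obtain ⟨⟨v, hv, hvc⟩, h⟩ := hi
      exact ⟨(hK i v hv).symm.trans hvc, h⟩
  -- the root of a deficient component (fewer edges than vertices)
  let D : H.ConnectedComponent → Finset (Fin n) := fun c =>
    if (E c).card < (V c).card then {r c} else ∅
  have hD : ∀ c, (E c).card + (D c).card ≤ (V c).card := by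
    intro c
    have := hEV c
    by_cases h : (E c).card < (V c).card
    · simp only [D, if_pos h, Finset.card_singleton]; omega
    · simp only [D, if_neg h, Finset.card_empty]; omega
  let t : Fin a → Finset (Fin n) := fun i => Finset.univ.filter fun v => v ∈ g i ∧ v ∉ D (K i)
  have hall : ∀ s : Finset (Fin a), s.card ≤ (s.biUnion t).card := by
    intro s
    rw [Finset.card_eq_sum_card_fiberwise (s := s) (f := K) (t := Finset.univ)
        (fun _ _ => Finset.mem_coe.2 (Finset.mem_univ _)),
      Finset.card_eq_sum_card_fiberwise (s := s.biUnion t) (f := H.connectedComponentMk)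
        (t := Finset.univ) (fun _ _ => Finset.mem_coe.2 (Finset.mem_univ _))]
    refine Finset.sum_le_sum fun c _ => ?_
    rcases (s.filter fun i => K i = c).eq_empty_or_nonempty with h0 | ⟨i₀, hi₀⟩
    · rw [h0]; simp
    let W : Finset (Fin n) := Finset.univ.filter fun v => ∃ i ∈ s, K i = c ∧ v ∈ g i
    have hi₀' := Finset.mem_filter.1 hi₀
    have hmem : (g i₀).out.1 ∈ W := by
      simp only [W, Finset.mem_filter, Finset.mem_univ, true_and]
      exact ⟨i₀, hi₀'.1, hi₀'.2, Sym2.out_fst_mem _⟩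
    have h1 := hout c W _ hmem hi₀'.2
    have hWV : W ⊆ V c := by
      intro v hv
      simp only [W, V, Finset.mem_filter, Finset.mem_univ, true_and] at hv ⊢
      obtain ⟨i, _, hic, hvi⟩ := hv
      exact (hK i v hvi).trans hic
    have h2 : (s.filter fun i => K i = c).card +
        ((E c).filter fun i => ∃ v ∈ g i, v ∉ W).card ≤ (E c).card := by
      rw [← Finset.card_union_of_disjoint]
      · refine Finset.card_le_card (Finset.union_subset ?_ (Finset.filter_subset _ _))
        intro i hi
        simpa [E] using (Finset.mem_filter.1 hi).2
      · rw [Finset.disjoint_left]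
        intro i hi hi'
        obtain ⟨v, hv, hvW⟩ := (Finset.mem_filter.1 hi').2
        refine hvW ?_
        simp only [W, Finset.mem_filter, Finset.mem_univ, true_and]
        exact ⟨i, (Finset.mem_filter.1 hi).1, (Finset.mem_filter.1 hi).2, hv⟩
    have h3 : (V c \ W).card = (V c).card - W.card := Finset.card_sdiff_of_subset hWV
    have h4 := Finset.card_le_card hWV
    have h5 := hD c
    have h6 : W.card - (D c).card ≤ (W \ D c).card := Finset.le_card_sdiff _ _
    have h7 : (W \ D c).card ≤
        ((s.biUnion t).filter fun v => H.connectedComponentMk v = c).card := by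
      refine Finset.card_le_card fun v hv => ?_
      obtain ⟨hvW, hvD⟩ := Finset.mem_sdiff.1 hv
      have hvV := hWV hvW
      simp only [W, V, t, Finset.mem_filter, Finset.mem_univ, true_and,
        Finset.mem_biUnion] at hvW hvV ⊢
      obtain ⟨i, his, hic, hvi⟩ := hvW
      exact ⟨⟨i, his, hvi, by rwa [hic]⟩, hvV⟩
    omega
  obtain ⟨m, hm, hmt⟩ := (Finset.all_card_le_biUnion_card_iff_exists_injective t).1 hall
  have hmg : ∀ i, m i ∈ g i ∧ m i ∉ D (K i) := fun i => by simpa [t] using hmt i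
  refine ⟨m, hm, fun i => (hmg i).1, fun v hv => ?_⟩
  by_contra hne
  set c := H.connectedComponentMk v with hc
  -- the edges of `c` are assigned to vertices of `c` other than `v` and the roots in `D c`
  have h1 : (E c).card ≤ ((V c \ D c).erase v).card := by
    refine Finset.card_le_card_of_injOn m ?_ hm.injOn
    intro i hi
    have hic : K i = c := by simpa [E] using hi
    have h := hmg i
    rw [hic] at h
    simp only [Finset.coe_erase, Set.mem_sdiff, Finset.mem_coe, Finset.mem_sdiff,
      Set.mem_singleton_iff]
    refine ⟨⟨?_, h.2⟩, hv i⟩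
    simp only [V, Finset.mem_filter, Finset.mem_univ, true_and]
    exact (hK i _ h.1).trans hic
  have hvV : v ∈ V c := by simp [V, hc]
  have hrV : r c ∈ V c := by simp [V, hr]
  have hvD : v ∉ D c := by
    simp only [D]
    split_ifs
    · simpa using hne
    · simp
  have hDV : D c ⊆ V c := by
    simp only [D]
    split_ifs
    · simpa using hrV
    · simp
  rw [Finset.card_erase_of_mem (Finset.mem_sdiff.2 ⟨hvV, hvD⟩),
    Finset.card_sdiff_of_subset hDV] at h1
  have hpos : 0 < (V c \ D c).card := Finset.card_pos.2 ⟨v, Finset.mem_sdiff.2 ⟨hvV, hvD⟩⟩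
  rw [Finset.card_sdiff_of_subset hDV] at hpos
  -- connectivity: at least `|c| - 1` edges
  have h2 := hout c {r c} (r c) (Finset.mem_singleton_self _) (hr c)
  have h3 := h2.trans (Finset.card_filter_le _ _)
  rw [Finset.card_sdiff_of_subset (Finset.singleton_subset_iff.2 hrV),
    Finset.card_singleton] at h3
  by_cases h : (E c).card < (V c).card
  · simp only [D, if_pos h, Finset.card_singleton] at h1 hpos
    omega
  · simp only [D, if_neg h, Finset.card_empty] at h1 hpos
    omega

/-! ### Codes -/

/-- The multigraph with one edge `s(v, w)` for each vertex `v` with `F v = some (w, b)`. -/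
def decodeGraph {n : ℕ} (F : Fin n → Option (Fin n × Bool)) : Multiset (Sym2 (Fin n)) :=
  ∑ v, (F v).elim 0 fun p => {s(v, p.1)}

/-- `F` encodes the rooted multigraph `(G, r)`: it orients the edges of `G` with outdegree at most
one, the Boolean marks the roots among the vertices of outdegree one, and all vertices of
outdegree zero are roots. -/
structure IsCode {n : ℕ} (G : Multiset (Sym2 (Fin n)))
    (r : (underlying G).ConnectedComponent → Fin n)
    (F : Fin n → Option (Fin n × Bool)) : Prop where
  graph : decodeGraph F = G
  mark_iff : ∀ v p, F v = some p → (p.2 = true ↔ v = r ((underlying G).connectedComponentMk v))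
  undef_root : ∀ v, F v = none → v = r ((underlying G).connectedComponentMk v)

lemma IsCode.root_eq {n : ℕ} {G : Multiset (Sym2 (Fin n))}
    {r r' : (underlying G).ConnectedComponent → Fin n}
    {F : Fin n → Option (Fin n × Bool)} (h : IsCode G r F) (h' : IsCode G r' F)
    (hr : ∀ c, (underlying G).connectedComponentMk (r c) = c) : r = r' := by
  funext c
  cases hF : F (r c) with
  | none => simpa [hr] using h'.undef_root _ hF
  | some p =>
    have h1 : p.2 = true := (h.mark_iff _ _ hF).2 (by rw [hr])
    simpa [hr] using (h'.mark_iff _ _ hF).1 h1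

lemma exists_code {n a : ℕ} (G : Multiset (Sym2 (Fin n))) (hGa : Multiset.card G = a)
    (hG : IsPseudoforestMulti G) (r : (underlying G).ConnectedComponent → Fin n)
    (hr : ∀ c, (underlying G).connectedComponentMk (r c) = c) :
    ∃ F, (Finset.univ.filter fun v => F v ≠ none).card = a ∧ IsCode G r F := by
  obtain ⟨g, hg⟩ : ∃ g : Fin a → Sym2 (Fin n), G = Finset.univ.val.map g := by
    induction G using Quot.inductionOn with
    | h l =>
      subst hGa
      refine ⟨l.get, ?_⟩
      exact (congrArg _ (List.ofFn_get l).symm).trans (Fin.univ_val_map l.get).symm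
  have hmemG : ∀ e, e ∈ G ↔ ∃ i, g i = e := by
    intro e
    rw [hg]
    simp
  obtain ⟨m, hm, hmg, hmr⟩ := exists_orientation (underlying G) g
    (by
      intro u v h
      rw [underlying, SimpleGraph.fromEdgeSet_adj] at h
      exact (hmemG _).1 h.1)
    (by
      intro i u hu v hv
      by_cases huv : u = v
      · rw [huv]
      · refine SimpleGraph.ConnectedComponent.sound (SimpleGraph.Adj.reachable ?_)
        rw [underlying, SimpleGraph.fromEdgeSet_adj]
        exact ⟨(hmemG _).2 ⟨i, (Sym2.mem_and_mem_iff huv).1 ⟨hu, hv⟩⟩, huv⟩)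
    (by
      intro c
      refine le_trans (le_of_eq ?_) (hG c)
      have : ∀ (p : Sym2 (Fin n) → Prop) [DecidablePred p], Multiset.card (G.filter p) =
          (Finset.univ.filter fun i => p (g i)).card := by
        intro p _
        conv_lhs => rw [hg, Multiset.filter_map, Multiset.card_map]
        rfl
      rw [this])
    r hr
  choose w hw using fun i => (Sym2.mem_iff_exists).1 (hmg i)
  let F : Fin n → Option (Fin n × Bool) := fun v =>
    if h : ∃ i, m i = v then
      some (w h.choose, decide (v = r ((underlying G).connectedComponentMk v)))
    else none
  have hFm : ∀ i, F (m i) =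
      some (w i, decide (m i = r ((underlying G).connectedComponentMk (m i)))) := by
    intro i
    have h : ∃ j, m j = m i := ⟨i, rfl⟩
    have hj : h.choose = i := hm h.choose_spec
    simp only [F, dif_pos h, hj]
  have hFn : ∀ v, (∀ i, m i ≠ v) → F v = none := by
    intro v hv
    simp only [F]
    rw [dif_neg]
    push Not
    exact hv
  refine ⟨F, ?_, ?_, ?_, ?_⟩
  · have : (Finset.univ.filter fun v => F v ≠ none) = Finset.univ.image m := by
      ext v
      simp only [Finset.mem_filter, Finset.mem_univ, true_and, Finset.mem_image]
      constructor
      · intro h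
        by_contra h'
        push Not at h'
        exact h (hFn v h')
      · rintro ⟨i, rfl⟩
        rw [hFm]
        simp
    rw [this, Finset.card_image_of_injective _ hm, Finset.card_univ, Fintype.card_fin]
  · have h1 : G = ∑ i, {g i} := by
      conv_lhs => rw [hg]
      rw [← Multiset.sum_map_singleton (Finset.univ.val.map g), Multiset.map_map]
      rfl
    rw [decodeGraph]
    conv_rhs => rw [h1]
    symm
    refine Finset.sum_of_injOn m hm.injOn (fun _ _ => Finset.mem_coe.2 (Finset.mem_univ _)) ?_ ?_
    · intro v _ hv
      rw [hFn v (fun i hi => hv ⟨i, by simp, hi⟩)]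
      rfl
    · intro i _
      rw [hFm, hw]
      rfl
  · intro v p hp
    simp only [F] at hp
    split_ifs at hp with h
    rw [← Option.some.inj hp]
    simp
  · intro v hv
    refine hmr v fun i hi => ?_
    rw [← hi, hFm] at hv
    simp at hv

lemma card_codes (n a : ℕ) :
    Nat.card {F : Fin n → Option (Fin n × Bool) //
      (Finset.univ.filter fun v => F v ≠ none).card = a} = n.choose a * (2 * n) ^ a := by
  rw [Nat.card_eq_fintype_card, Fintype.card_subtype,
    Finset.card_eq_sum_card_fiberwise
      (f := fun F : Fin n → Option (Fin n × Bool) => Finset.univ.filter fun v => F v ≠ none)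
      (t := Finset.powersetCard a Finset.univ)]
  · rw [Finset.sum_congr rfl (g := fun _ => (2 * n) ^ a)]
    · simp
    intro S hS
    have hSa : S.card = a := (Finset.mem_powersetCard.1 hS).2
    have : (Finset.filter (fun F : Fin n → Option (Fin n × Bool) =>
        (Finset.univ.filter fun v => F v ≠ none) = S)
        (Finset.univ.filter fun F => (Finset.univ.filter fun v => F v ≠ none).card = a)) =
        Fintype.piFinset fun v : Fin n =>
          if v ∈ S then Finset.univ.erase none else {none} := by
      ext F
      simp only [Finset.mem_filter, Finset.mem_univ, true_and, Fintype.mem_piFinset]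
      constructor
      · rintro ⟨_, rfl⟩ v
        by_cases h : F v = none <;> simp [h]
      · intro h
        have hFS : (Finset.univ.filter fun v => F v ≠ none) = S := by
          ext v
          have := h v
          by_cases hv : v ∈ S <;> simp [hv] at this ⊢ <;> exact this
        exact ⟨by rw [hFS, hSa], hFS⟩
    rw [this, Fintype.card_piFinset]
    simp only [apply_ite Finset.card, Finset.card_singleton]
    rw [Finset.prod_ite_mem, Finset.univ_inter, Finset.prod_const, hSa,
      Finset.card_erase_of_mem (Finset.mem_univ _)]
    simp [mul_comm]
  · intro F hF
    simpa [Finset.mem_powersetCard] using hF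

/-- Lemma 4 of the paper: the number of rooted pseudoforests on `n` vertices
with exactly `a` edges (allowing self-loops and multiple edges) is at most `C(n,a)·(2n)^a`. The
count is over pairs of such a multigraph together with a choice of a root in each connected
component. -/
theorem stmt15 (n a : ℕ) (hn : 1 ≤ n) :
    Nat.card ((G : {G : Multiset (Sym2 (Fin n)) // Multiset.card G = a ∧ IsPseudoforestMulti G}) ×
        {r : (underlying G.1).ConnectedComponent → Fin n //
          ∀ c, (underlying G.1).connectedComponentMk (r c) = c}) ≤
      Nat.choose n a * (2 * n) ^ a := by
  choose F hFa hF using fun x : ((G : {G : Multiset (Sym2 (Fin n)) //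
      Multiset.card G = a ∧ IsPseudoforestMulti G}) ×
        {r : (underlying G.1).ConnectedComponent → Fin n //
          ∀ c, (underlying G.1).connectedComponentMk (r c) = c}) =>
    exists_code x.1.1 x.1.2.1 x.1.2.2 x.2.1 x.2.2
  rw [← card_codes n a]
  refine Nat.card_le_card_of_injective (fun x => ⟨F x, hFa x⟩) fun x y hxy => ?_
  have hFF : F x = F y := congrArg Subtype.val hxy
  have hx := hF x
  have hy := hF y
  rw [← hFF] at hy
  obtain ⟨⟨G, hG⟩, r, hr⟩ := x
  obtain ⟨⟨G', hG'⟩, r', hr'⟩ := y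
  obtain rfl : G = G' := hx.graph.symm.trans hy.graph
  obtain rfl : r = r' := hx.root_eq hy hr
  rfl

end
end

section
/- Let a, b, d, α, λ > 0 be real numbers with b·e^{α+1}·λ < 1/4, and let X be a Poisson random variable with mean λ. Then E[(a + bX)^{X+d}·exp(αX)] ≤ a^d·(1 + 2b·e^{α+1}·λ)^d·exp(λ·(a·e^{α}·(1 + 2b·e^{α+1}·λ) − 1)) + 27·e^{−λ}·max{(4bd)^d, a^d}. -/
/-!
Write `E = exp (α + 1)` and `s = 1 + 2 * b * E * lam`, and split the sum at `j = 2 * a * E * lam`.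

* If `j ≤ 2 * a * E * lam`, then `a + b * j ≤ a * s`, and the sum of the corresponding majorants is
  an exponential series with value exactly the first term of the bound (`small_term`).
* Otherwise `lam * E * (a + b * j) ≤ 3 / 4 * j`, so `j ^ j / j! ≤ exp j` shows that the factors with
  exponent `j` contribute at most `(3 / 4) ^ j`. With `M = max (4 * b * d) a`, the inequality
  `1 + x ≤ exp x` gives `(a + b * j) ^ d ≤ M ^ d * exp (j / 4)`. Since
  `3 / 4 * exp (1 / 4) ≤ 27 / 28`, these terms are dominated by a geometric series over `j ≥ 1`
  with sum `27` (`large_term`).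
-/

open scoped ENNReal

/-- The geometric ratio of the tail; it rests on `exp 1 ≤ (9 / 7) ^ 4`. -/
lemma ratio_le : 3 / 4 * Real.exp (1 / 4) ≤ 27 / 28 := by
  have h : Real.exp (1 / 4) ≤ 9 / 7 := by
    refine le_of_pow_le_pow_left₀ (n := 4) (by norm_num) (by norm_num) ?_
    rw [← Real.exp_nat_mul]
    have h1 := Real.exp_one_lt_d9
    norm_num at h1 ⊢
    linarith
  linarith

lemma rpow_le_max (a b d : ℝ) (ha : 0 < a) (hb : 0 < b) (hd : 0 < d) (j : ℕ) :
    (a + b * j) ^ d ≤ max ((4 * b * d) ^ d) (a ^ d) * Real.exp (1 / 4) ^ j := by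
  set M := max (4 * b * d) a with hM
  have hM0 : 0 < M := lt_max_of_lt_right ha
  have hMd : M ^ d ≤ max ((4 * b * d) ^ d) (a ^ d) := by
    rcases max_choice (4 * b * d) a with h | h <;> rw [hM, h]
    · exact le_max_left _ _
    · exact le_max_right _ _
  have h1 : a + b * j ≤ M * Real.exp (b * j / M) := by
    have h2 := Real.add_one_le_exp (b * j / M)
    calc a + b * j ≤ M + b * j := by gcongr; exact le_max_right _ _
      _ = M * (b * j / M + 1) := by field_simp; ring
      _ ≤ _ := by gcongr
  calc (a + b * j) ^ d ≤ (M * Real.exp (b * j / M)) ^ d := by gcongr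
    _ = M ^ d * Real.exp (b * j / M * d) := by
      rw [Real.mul_rpow hM0.le (Real.exp_pos _).le, ← Real.exp_mul]
    _ ≤ M ^ d * Real.exp (j * (1 / 4)) := by
      refine mul_le_mul_of_nonneg_left (Real.exp_le_exp.mpr ?_) (by positivity)
      have h3 : 4 * b * d ≤ M := le_max_left _ _
      rw [div_mul_eq_mul_div, div_le_iff₀ hM0]
      have hj : (0 : ℝ) ≤ j := j.cast_nonneg
      nlinarith
    _ ≤ _ := by
      rw [Real.exp_nat_mul]
      gcongr

lemma small_term (a b d α lam s : ℝ) (ha : 0 < a) (hb : 0 < b) (hd : 0 < d)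
    (hlam : 0 < lam) (j : ℕ) (h : a + b * j ≤ a * s) (hs : 0 < s) :
    Real.exp (-lam) * lam ^ j / (Nat.factorial j) *
          (a + b * j) ^ ((j : ℝ) + d) * Real.exp (α * j) ≤
      a ^ d * s ^ d * Real.exp (-lam) * ((lam * (a * Real.exp α * s)) ^ j / (Nat.factorial j)) := by
  have has : 0 < a * s := mul_pos ha hs
  calc _ ≤ Real.exp (-lam) * lam ^ j / (Nat.factorial j) *
          (a * s) ^ ((j : ℝ) + d) * Real.exp (α * j) := by gcongr
    _ = _ := by
      rw [Real.rpow_add has, Real.rpow_natCast, Real.mul_rpow ha.le hs.le, mul_comm α,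
        Real.exp_nat_mul]
      ring

lemma large_term (a b d α lam : ℝ) (ha : 0 < a) (hb : 0 < b) (hd : 0 < d)
    (hlam : 0 < lam) (j : ℕ) (h : lam * Real.exp (α + 1) * (a + b * j) ≤ 3 / 4 * j) :
    Real.exp (-lam) * lam ^ j / (Nat.factorial j) *
          (a + b * j) ^ ((j : ℝ) + d) * Real.exp (α * j) ≤
      Real.exp (-lam) * max ((4 * b * d) ^ d) (a ^ d) * (27 / 28) ^ j := by
  have hy : 0 < a + b * j := by positivity
  have h1 : (lam * Real.exp α * (a + b * j)) ^ j / (Nat.factorial j) ≤ (3 / 4) ^ j := by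
    have h2 := Real.pow_div_factorial_le_exp (j : ℝ) j.cast_nonneg j
    have h3 : lam * Real.exp α * (a + b * j) ≤ 3 / 4 * j * Real.exp (-1) := by
      calc _ = lam * Real.exp (α + 1) * (a + b * j) * Real.exp (-1) := by
            have : Real.exp α = Real.exp (α + 1) * Real.exp (-1) := by
              rw [← Real.exp_add]; congr 1; ring
            rw [this]; ring
        _ ≤ _ := by gcongr
    calc _ ≤ (3 / 4 * j * Real.exp (-1)) ^ j / (Nat.factorial j) := by gcongr
      _ = (3 / 4) ^ j * Real.exp (-1) ^ j * ((j : ℝ) ^ j / (Nat.factorial j)) := by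
        rw [mul_pow, mul_pow]; ring
      _ ≤ (3 / 4) ^ j * Real.exp (-1) ^ j * Real.exp j := by gcongr
      _ = (3 / 4) ^ j := by
        rw [← Real.exp_nat_mul, mul_assoc, ← Real.exp_add]
        simp
  have h4 := rpow_le_max a b d ha hb hd j
  calc _ = Real.exp (-lam) * ((lam * Real.exp α * (a + b * j)) ^ j / (Nat.factorial j)) *
        (a + b * j) ^ d := by
        rw [Real.rpow_add hy, Real.rpow_natCast, mul_comm α, Real.exp_nat_mul,
          mul_pow, mul_pow]
        ring
    _ ≤ Real.exp (-lam) * (3 / 4) ^ j *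
        (max ((4 * b * d) ^ d) (a ^ d) * Real.exp (1 / 4) ^ j) := by gcongr
    _ = Real.exp (-lam) * max ((4 * b * d) ^ d) (a ^ d) * (3 / 4 * Real.exp (1 / 4)) ^ j := by
        rw [mul_pow]; ring
    _ ≤ _ := by
        have := ratio_le
        gcongr

/-- Lemma 6 of the paper, main bound: for `a, b, d, α, λ > 0` with
`b·e^{α+1}·λ < 1/4` and `X ~ Poisson(λ)`,
`E[(a+bX)^{X+d} e^{αX}] ≤ a^d (1+2b e^{α+1} λ)^d exp(λ(a e^α (1+2b e^{α+1} λ) - 1))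
  + 27 e^{-λ} max{(4bd)^d, a^d}`.
The expectation is written as the (possibly infinite) sum
`∑_{j≥0} e^{-λ} λ^j/j! (a+bj)^{j+d} e^{αj}` in `ℝ≥0∞`; the bound in particular shows it is
finite. -/
theorem stmt16 (a b d α lam : ℝ) (ha : 0 < a) (hb : 0 < b) (hd : 0 < d) (hα : 0 < α)
    (hlam : 0 < lam) (hcond : b * Real.exp (α + 1) * lam < 1 / 4) :
    (∑' j : ℕ, ENNReal.ofReal
        (Real.exp (-lam) * lam ^ j / (Nat.factorial j) *
          (a + b * j) ^ ((j : ℝ) + d) * Real.exp (α * j))) ≤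
      ENNReal.ofReal
        (a ^ d * (1 + 2 * b * Real.exp (α + 1) * lam) ^ d *
            Real.exp (lam * (a * Real.exp α * (1 + 2 * b * Real.exp (α + 1) * lam) - 1)) +
          27 * Real.exp (-lam) * max ((4 * b * d) ^ d) (a ^ d)) := by
  set s := 1 + 2 * b * Real.exp (α + 1) * lam with hs
  have hs0 : 0 < s := by positivity
  set K := max ((4 * b * d) ^ d) (a ^ d) with hK
  have hK0 : 0 < K := lt_max_of_lt_right (by positivity)
  -- The geometric majorant leaves out `j = 0`, which makes its sum `28 - 1 = 27`.
  let g : ℕ → ℝ := fun j => (27 / 28) ^ j - if j = 0 then 1 else 0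
  have hg0 : ∀ j, 0 ≤ g j := by
    intro j
    by_cases hj : j = 0
    · simp [g, hj]
    · simp only [g, hj, if_false, sub_zero]; positivity
  have hg : HasSum g 27 := by
    have h1 := (hasSum_geometric_of_lt_one (r := (27 / 28 : ℝ)) (by norm_num) (by norm_num)).sub
      (hasSum_ite_eq (0 : ℕ) (1 : ℝ))
    have h2 : ((1 : ℝ) - 27 / 28)⁻¹ - 1 = 27 := by norm_num
    rwa [h2] at h1
  have hf : HasSum (fun j : ℕ => (lam * (a * Real.exp α * s)) ^ j / (Nat.factorial j))
      (Real.exp (lam * (a * Real.exp α * s))) := by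
    rw [Real.exp_eq_exp_ℝ]
    exact NormedSpace.expSeries_div_hasSum_exp _
  have hsum := (hf.mul_left (a ^ d * s ^ d * Real.exp (-lam))).add
    (hg.mul_left (Real.exp (-lam) * K))
  have hval : a ^ d * s ^ d * Real.exp (-lam) * Real.exp (lam * (a * Real.exp α * s)) +
      Real.exp (-lam) * K * 27 = a ^ d * s ^ d * Real.exp (lam * (a * Real.exp α * s - 1)) +
          27 * Real.exp (-lam) * K := by
    rw [mul_assoc _ (Real.exp (-lam)) (Real.exp _), ← Real.exp_add]
    ring_nf
  rw [hval] at hsum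
  rw [← hsum.tsum_eq, ENNReal.ofReal_tsum_of_nonneg _ hsum.summable]
  · refine ENNReal.tsum_le_tsum fun j => ENNReal.ofReal_le_ofReal ?_
    by_cases hj : (j : ℝ) ≤ 2 * a * Real.exp (α + 1) * lam
    · have h1 : a + b * j ≤ a * s := by
        rw [hs]
        nlinarith [mul_le_mul_of_nonneg_left hj hb.le]
      refine (small_term a b d α lam s ha hb hd hlam j h1 hs0).trans ?_
      have := hg0 j
      exact le_add_of_nonneg_right (by positivity)
    · push Not at hj
      have hj0 : j ≠ 0 := by
        rintro rfl
        have : 0 < 2 * a * Real.exp (α + 1) * lam := by positivity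
        simp only [Nat.cast_zero] at hj
        linarith
      have h1 : lam * Real.exp (α + 1) * (a + b * j) ≤ 3 / 4 * j := by
        have := mul_le_mul_of_nonneg_right hcond.le (j.cast_nonneg (α := ℝ))
        linarith
      refine (large_term a b d α lam ha hb hd hlam j h1).trans ?_
      simp only [g, hj0, if_false, sub_zero]
      exact le_add_of_nonneg_left (by positivity)
  · intro j
    have := hg0 j
    positivity
end
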